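/- arXiv:1304.7936 — 2 statements merged into one kernel-verified Lean document; each statement's English description precedes it below -/
import Mathlib

section
/- A continuous function f : [0,∞) → [0,∞) is operator monotone if and only if there exists a finite Borel measure ν on the extended half-line [0,∞] such that f(x) = ∫_{[0,∞]} φ(x,λ) dν(λ) for all x ∈ [0,∞), where φ(x,λ) = x(λ+1)/(x+λ) for λ ∈ (0,∞), φ(x,0) = 1, and φ(x,∞) = x. -/
open MeasureTheory Real ComplexOrder ENNReal

/-- `f` is operator monotone on `[0,∞)`: for all `n` and all positive semidefinite complex
`n × n` matrices `A ≤ B` (Loewner order), `f(A) ≤ f(B)` via the continuous functional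
calculus. -/
def OperatorMonotone (f : ℝ → ℝ) : Prop :=
  ∀ (n : ℕ) (A B : Matrix (Fin n) (Fin n) ℂ),
    A.PosSemidef → B.PosSemidef → (B - A).PosSemidef →
    (cfc f B - cfc f A).PosSemidef

/-- The integrand `φ(x, λ) = x(λ+1)/(x+λ)` for `λ ∈ (0,∞)`, with `φ(x,0) = 1` and
`φ(x,∞) = x`. -/
noncomputable def phi (x : ℝ) (l : ℝ≥0∞) : ℝ :=
  if l = 0 then 1 else if l = ⊤ then x else x * (l.toReal + 1) / (x + l.toReal)

/-!
Averages of the operator monotone functions `φ(·, λ)` are operator monotone. Conversely, let `f`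
be operator monotone with `f 0 ≥ 0`. On `2m` nodes the weights `w x = ∏ (x - y)⁻¹` satisfy
`∑ w x * a(x)² = 0` for every polynomial `a` of degree less than `m`, so evaluating `a` at the nodes
of positive and of negative weight gives two coordinate systems in which `∑ |w x| a(x)²` is the same
norm, while `∑ w x * x * a(x)² ≥ 0` compares the two diagonal matrices of nodes. Operator
monotonicity upgrades this to `∑ w x * f x * a(x)² ≥ 0`. Sending one node to `0` or to `∞`, and
writing a polynomial that is nonnegative on `(0, ∞)` as a sum of terms `p²` and `X * q²`, one
finds that `∑ c x * f x ≥ 0` whenever `∑ c x * φ(x, λ) ≥ 0` for all `λ`. Thus `φ(x, ·) ↦ f x`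
extends to a positive functional on `C([0, ∞], ℝ)`, which the Riesz–Markov theorem represents by a
measure.
-/

theorem phi_eq_sub_inv {x : ℝ} {l : ℝ≥0∞} (hx : 0 ≤ x) (h0 : l ≠ 0) (htop : l ≠ ⊤) :
    phi x l = (l.toReal + 1) - (l.toReal + 1) * l.toReal * (x + l.toReal)⁻¹ := by
  have : x + l.toReal ≠ 0 := (add_pos_of_nonneg_of_pos hx (ENNReal.toReal_pos h0 htop)).ne'
  simp only [phi, if_neg h0, if_neg htop]
  field_simp
  ring

section CStarAlgebra

variable {A : Type*} [CStarAlgebra A] [PartialOrder A] [StarOrderedRing A]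

theorem cfc_phi {a : A} (ha : 0 ≤ a) {l : ℝ≥0∞} (h0 : l ≠ 0) (htop : l ≠ ⊤) :
    cfc (phi · l) a = algebraMap ℝ A (l.toReal + 1) -
      ((l.toReal + 1) * l.toReal) • Ring.inverse (a + algebraMap ℝ A l.toReal) := by
  have hspec : ∀ x ∈ spectrum ℝ a, 0 ≤ x := fun x hx ↦ spectrum_nonneg_of_nonneg ha hx
  have hne : ∀ x ∈ spectrum ℝ a, x + l.toReal ≠ 0 := fun x hx ↦
    (add_pos_of_nonneg_of_pos (hspec x hx) (ENNReal.toReal_pos h0 htop)).ne'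
  have hcont : ContinuousOn (fun x : ℝ ↦ (x + l.toReal)⁻¹) (spectrum ℝ a) :=
    (by fun_prop : Continuous fun x : ℝ ↦ x + l.toReal).continuousOn.inv₀ hne
  rw [cfc_congr fun x hx ↦ phi_eq_sub_inv (hspec x hx) h0 htop,
    cfc_sub _ _ a continuousOn_const (hcont.const_mul _), cfc_const _ a,
    cfc_const_mul _ _ a hcont, cfc_inv _ a hne, cfc_add_const _ _ a, cfc_id' ℝ a]

theorem monotoneOn_cfc_phi (l : ℝ≥0∞) :
    MonotoneOn (cfc (phi · l) : A → A) (Set.Ici 0) := by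
  intro a (ha : 0 ≤ a) b (hb : 0 ≤ b) hab
  rcases eq_or_ne l 0 with rfl | h0
  · simp [phi, cfc_const_one ℝ a, cfc_const_one ℝ b]
  rcases eq_or_ne l ⊤ with rfl | htop
  · simpa [phi, cfc_id' ℝ a, cfc_id' ℝ b] using hab
  have hl : IsStrictlyPositive (algebraMap ℝ A l.toReal) :=
    isStrictlyPositive_algebraMap (ENNReal.toReal_pos h0 htop)
  have hinv := CStarAlgebra.antitoneOn_ringInverse (hl.nonneg_add ha) (hl.nonneg_add hb)
    (add_le_add_left hab _)
  rw [cfc_phi ha h0 htop, cfc_phi hb h0 htop]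
  gcongr

end CStarAlgebra

open scoped MatrixOrder Matrix.Norms.L2Operator in
theorem operatorMonotone_phi (l : ℝ≥0∞) : OperatorMonotone (phi · l) :=
  fun _ _ _ hA hB hAB ↦ Matrix.le_iff.1 <|
    monotoneOn_cfc_phi l (Matrix.nonneg_iff_posSemidef.2 hA) (Matrix.nonneg_iff_posSemidef.2 hB)
      (Matrix.le_iff.2 hAB)

section FunctionalCalculus

open Matrix

theorem cfc_algHom_pi_apply {κ A : Type*} [Finite κ] [Ring A] [StarRing A] [TopologicalSpace A]
    [Algebra ℝ A] {p : A → Prop} [ContinuousFunctionalCalculus ℝ A p]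
    (Θ : (κ → ℝ) →ₐ[ℝ] A) (f : ℝ → ℝ) (d : κ → ℝ) (hd : p (Θ d)) :
    cfc f (Θ d) = Θ (f ∘ d) := by
  obtain ⟨P, hP⟩ : ∃ P : Polynomial ℝ, ∀ i, P.eval (d i) = f (d i) := by
    have := Fintype.ofFinite κ
    classical
    exact ⟨Lagrange.interpolate (Finset.univ.image d) id f, fun i ↦
      Lagrange.eval_interpolate_at_node f Function.injective_id.injOn (by simp)⟩
  have hspec : spectrum ℝ (Θ d) ⊆ Set.range d := by
    refine (AlgHom.spectrum_apply_subset Θ d).trans ?_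
    rw [Pi.spectrum_eq]
    exact Set.iUnion_subset fun i x hx ↦ ⟨i, by
      simpa [eq_comm] using (spectrum.scalar_eq (𝕜 := ℝ) (A := ℝ) (d i)).subset hx⟩
  calc cfc f (Θ d) = cfc P.eval (Θ d) := cfc_congr fun x hx ↦ by
        obtain ⟨i, rfl⟩ := hspec hx
        exact (hP i).symm
    _ = Θ (Polynomial.aeval d P) := by
        rw [cfc_polynomial P _ hd, Polynomial.aeval_algHom_apply]
    _ = Θ (f ∘ d) := by
        congr 1
        ext i
        rw [Polynomial.aeval_pi_apply₂]
        simp [hP]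

variable {n : Type*} [Fintype n] [DecidableEq n]

theorem star_dotProduct_cfc_mulVec {A : Matrix n n ℂ} (hA : A.IsHermitian)
    (v : n → ℂ) (f : ℝ → ℝ) :
    star v ⬝ᵥ (cfc f A *ᵥ v) = ((∑ i, f (hA.eigenvalues i) *
      Complex.normSq (((hA.eigenvectorUnitary : Matrix n n ℂ)ᴴ *ᵥ v) i) : ℝ) : ℂ) := by
  set U : Matrix n n ℂ := ↑hA.eigenvectorUnitary
  have hcfc : cfc f A = U * diagonal (fun i ↦ (f (hA.eigenvalues i) : ℂ)) * Uᴴ := hA.cfc_eq f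
  rw [hcfc, ← mulVec_mulVec, ← mulVec_mulVec, dotProduct_mulVec, ← conjTranspose_conjTranspose U,
    ← star_mulVec, conjTranspose_conjTranspose]
  push_cast [Complex.normSq_eq_conj_mul_self]
  refine Finset.sum_congr rfl fun i _ ↦ ?_
  rw [mulVec_diagonal, Pi.star_apply, RCLike.star_def]
  ring

end FunctionalCalculus

section Integral

open Matrix

theorem star_dotProduct_cfc_mulVec_eq_integral {Ω : Type*} [MeasurableSpace Ω] {μ : Measure Ω}
    {F : ℝ → Ω → ℝ} {f : ℝ → ℝ} (hint : ∀ x, 0 ≤ x → Integrable (F x) μ)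
    (hf : ∀ x, 0 ≤ x → f x = ∫ ω, F x ω ∂μ) {n : Type*} [Fintype n] [DecidableEq n]
    {A : Matrix n n ℂ} (hA : A.PosSemidef) (v : n → ℂ) :
    Integrable (fun ω ↦ star v ⬝ᵥ (cfc (F · ω) A *ᵥ v)) μ ∧
      star v ⬝ᵥ (cfc f A *ᵥ v) = ∫ ω, star v ⬝ᵥ (cfc (F · ω) A *ᵥ v) ∂μ := by
  simp only [star_dotProduct_cfc_mulVec hA.1]
  have hterm : ∀ i, Integrable (fun ω ↦ F (hA.1.eigenvalues i) ω *
      Complex.normSq (((hA.1.eigenvectorUnitary : Matrix n n ℂ)ᴴ *ᵥ v) i)) μ :=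
    fun i ↦ (hint _ (hA.eigenvalues_nonneg i)).mul_const _
  refine ⟨(integrable_finsetSum _ fun i _ ↦ hterm i).ofReal, ?_⟩
  rw [integral_complex_ofReal, integral_finsetSum _ fun i _ ↦ hterm i]
  simp only [integral_mul_const, hf _ (hA.eigenvalues_nonneg _)]

theorem OperatorMonotone.of_integral {Ω : Type*} [MeasurableSpace Ω] {μ : Measure Ω}
    {F : ℝ → Ω → ℝ} {f : ℝ → ℝ} (hF : ∀ ω, OperatorMonotone (F · ω))
    (hint : ∀ x, 0 ≤ x → Integrable (F x) μ) (hf : ∀ x, 0 ≤ x → f x = ∫ ω, F x ω ∂μ) :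
    OperatorMonotone f := by
  intro n A B hA hB hAB
  refine PosSemidef.of_dotProduct_mulVec_nonneg
    ((cfc_predicate f B).sub (cfc_predicate f A)) fun v ↦ ?_
  obtain ⟨hintA, hfA⟩ := star_dotProduct_cfc_mulVec_eq_integral hint hf hA v
  obtain ⟨hintB, hfB⟩ := star_dotProduct_cfc_mulVec_eq_integral hint hf hB v
  rw [sub_mulVec, dotProduct_sub, hfA, hfB, ← integral_sub hintB hintA]
  refine integral_nonneg fun ω ↦ ?_
  have hω := (hF ω n A B hA hB hAB).dotProduct_mulVec_nonneg v
  rwa [sub_mulVec, dotProduct_sub] at hω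

end Integral

section Kernel

theorem measurable_phi (x : ℝ) : Measurable (phi x) :=
  Measurable.ite (measurableSet_singleton 0) measurable_const <|
    Measurable.ite (measurableSet_singleton ⊤) measurable_const (by fun_prop)

theorem phi_nonneg {x : ℝ} (hx : 0 ≤ x) (l : ℝ≥0∞) : 0 ≤ phi x l := by
  unfold phi
  split_ifs <;> positivity

theorem phi_le_one_add {x : ℝ} (hx : 0 ≤ x) (l : ℝ≥0∞) : phi x l ≤ 1 + x := by
  unfold phi
  split_ifs with h0 htop
  · linarith
  · linarith
  · have hl : 0 < l.toReal := ENNReal.toReal_pos h0 htop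
    rw [div_le_iff₀ (by positivity)]
    nlinarith

theorem integrable_phi {x : ℝ} (hx : 0 ≤ x) (ν : Measure ℝ≥0∞) [IsFiniteMeasure ν] :
    Integrable (phi x) ν :=
  Integrable.of_bound (measurable_phi x).aestronglyMeasurable (1 + x) <|
    Filter.Eventually.of_forall fun l ↦ by
      simpa only [Real.norm_of_nonneg (phi_nonneg hx l)] using phi_le_one_add hx l

theorem phi_one_left (l : ℝ≥0∞) : phi 1 l = 1 := by
  have : l.toReal + 1 ≠ 0 := by positivity
  unfold phi
  split_ifs <;> simp [add_comm 1 l.toReal, this]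

-- `s = (l + 1)⁻¹` identifies `[0,∞]` with `[0,1]`, and `φ x` becomes a rational function of `s`.
theorem phi_eq_div {x : ℝ} (hx : 0 < x) (l : ℝ≥0∞) :
    phi x l = x / (x * ((l + 1)⁻¹).toReal + (1 - ((l + 1)⁻¹).toReal)) := by
  rcases eq_or_ne l ⊤ with rfl | htop
  · simp [phi]
  have hl : 0 ≤ l.toReal := ENNReal.toReal_nonneg
  have hs : ((l + 1)⁻¹).toReal = (l.toReal + 1)⁻¹ := by
    rw [ENNReal.toReal_inv, ENNReal.toReal_add htop one_ne_top, toReal_one]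
  rw [hs]
  rcases eq_or_ne l 0 with rfl | h0
  · simp [phi, hx.ne']
  have hden : x * (l.toReal + 1)⁻¹ + (1 - (l.toReal + 1)⁻¹) =
      (x + l.toReal) / (l.toReal + 1) := by
    field_simp
    ring
  rw [hden, div_div_eq_mul_div, phi, if_neg h0, if_neg htop]

theorem continuous_phi {x : ℝ} (hx : 0 < x) : Continuous (phi x) := by
  have hfin : ∀ l : ℝ≥0∞, (l + 1)⁻¹ ≠ ⊤ := fun l ↦ by simp
  have hs : Continuous fun l : ℝ≥0∞ ↦ ((l + 1)⁻¹).toReal :=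
    continuous_iff_continuousAt.2 fun l ↦
      (ENNReal.tendsto_toReal (hfin l)).comp (by fun_prop : ContinuousAt (fun l ↦ (l + 1)⁻¹) l)
  have hs_le : ∀ l : ℝ≥0∞, ((l + 1)⁻¹).toReal ≤ 1 := fun l ↦
    ENNReal.toReal_le_of_le_ofReal zero_le_one (by simp)
  rw [funext (phi_eq_div hx)]
  refine continuous_const.div (by fun_prop) fun l ↦ ?_
  have hs_nonneg : 0 ≤ ((l + 1)⁻¹).toReal := ENNReal.toReal_nonneg
  rcases hs_nonneg.eq_or_lt with h | h
  · simp [← h]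
  · exact (add_pos_of_pos_of_nonneg (mul_pos hx h) (sub_nonneg.2 (hs_le l))).ne'

end Kernel

section Contraction

open Matrix Unitary
open scoped MatrixOrder

theorem posSemidef_map_ofReal_iff {n : Type*} [Finite n] {M : Matrix n n ℝ} :
    (M.map Complex.ofReal).PosSemidef ↔ M.PosSemidef := by
  have := Fintype.ofFinite n
  classical
  constructor
  · intro h
    refine .of_dotProduct_mulVec_nonneg ?_ fun v ↦ ?_
    · ext i j
      simpa using congrFun₂ h.1 i j
    · have hv := h.dotProduct_mulVec_nonneg (fun i ↦ (v i : ℂ))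
      have hcast : (M.map Complex.ofReal) *ᵥ (fun i ↦ (v i : ℂ)) = fun i ↦ ((M *ᵥ v) i : ℂ) := by
        ext i
        simp [mulVec, dotProduct]
      rw [hcast] at hv
      simpa [dotProduct, ← Complex.ofReal_mul, ← Complex.ofReal_sum] using hv
  · intro h
    obtain ⟨N, rfl⟩ := CStarAlgebra.nonneg_iff_eq_star_mul_self.1 h.nonneg
    convert posSemidef_conjTranspose_mul_self (N.map Complex.ofReal) using 1
    ext i j
    simp [mul_apply, star_eq_conjTranspose]

variable {n : Type*} [Fintype n]

theorem star_dotProduct_conjStarAlgAut_mulVec [DecidableEq n] (U : unitary (Matrix n n ℝ))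
    (d v : n → ℝ) :
    star v ⬝ᵥ (conjStarAlgAut ℝ _ U (diagonal d) *ᵥ v) =
      ∑ i, d i * ((star (U : Matrix n n ℝ)) *ᵥ v) i ^ 2 := by
  rw [conjStarAlgAut_apply, ← mulVec_mulVec, ← mulVec_mulVec, dotProduct_mulVec]
  have : star v ᵥ* (U : Matrix n n ℝ) = star (U : Matrix n n ℝ) *ᵥ v := by
    rw [star_eq_conjTranspose, conjTranspose_eq_transpose_of_trivial, mulVec_transpose]
    rfl
  rw [this]
  simp only [dotProduct, mulVec_diagonal]
  exact Finset.sum_congr rfl fun i _ ↦ by ring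

theorem isHermitian_conjStarAlgAut_diagonal [DecidableEq n] (U : unitary (Matrix n n ℝ))
    (d : n → ℝ) : (conjStarAlgAut ℝ _ U (diagonal d)).IsHermitian :=
  (isHermitian_diagonal d).isSelfAdjoint.map (conjStarAlgAut ℝ _ U)

theorem posSemidef_conjStarAlgAut_diagonal [DecidableEq n] (U : unitary (Matrix n n ℝ))
    {d : n → ℝ} (hd : 0 ≤ d) : (conjStarAlgAut ℝ _ U (diagonal d)).PosSemidef :=
  (PosSemidef.diagonal hd).mul_mul_conjTranspose_same _

theorem cfc_map_ofReal_conjStarAlgAut_diagonal [DecidableEq n] (U : unitary (Matrix n n ℝ))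
    (f : ℝ → ℝ) (d : n → ℝ) :
    cfc f ((conjStarAlgAut ℝ _ U (diagonal d)).map Complex.ofReal) =
      (conjStarAlgAut ℝ _ U (diagonal (f ∘ d))).map Complex.ofReal :=
  cfc_algHom_pi_apply ((Complex.ofRealAm.mapMatrix.comp
      (conjStarAlgAut ℝ _ U).toAlgEquiv.toAlgHom).comp (diagonalAlgHom ℝ)) f d
    ((isHermitian_conjStarAlgAut_diagonal U d).map Complex.ofReal fun _ ↦ by simp)

theorem OperatorMonotone.posSemidef_conjStarAlgAut_diagonal_sub {f : ℝ → ℝ}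
    (hf : OperatorMonotone f) {n : ℕ} (U V : unitary (Matrix (Fin n) (Fin n) ℝ))
    {α β : Fin n → ℝ} (hα : 0 ≤ α) (hβ : 0 ≤ β)
    (h : (conjStarAlgAut ℝ _ V (diagonal β) - conjStarAlgAut ℝ _ U (diagonal α)).PosSemidef) :
    (conjStarAlgAut ℝ _ V (diagonal (f ∘ β)) -
      conjStarAlgAut ℝ _ U (diagonal (f ∘ α))).PosSemidef := by
  rw [← posSemidef_map_ofReal_iff, Matrix.map_sub _ Complex.ofReal_sub] at h ⊢
  have := hf n _ _ (posSemidef_map_ofReal_iff.2 (posSemidef_conjStarAlgAut_diagonal U hα))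
    (posSemidef_map_ofReal_iff.2 (posSemidef_conjStarAlgAut_diagonal V hβ)) h
  rwa [cfc_map_ofReal_conjStarAlgAut_diagonal, cfc_map_ofReal_conjStarAlgAut_diagonal] at this

theorem mem_unitary_of_sum_sq_mulVec [DecidableEq n] {M : Matrix n n ℝ}
    (hM : ∀ v, ∑ i, (M *ᵥ v) i ^ 2 = ∑ i, v i ^ 2) : M ∈ unitary (Matrix n n ℝ) := by
  have hself : star M * M = 1 := by
    have hherm : (star M * M - 1).IsHermitian :=
      (isHermitian_conjTranspose_mul_self M).sub isHermitian_one
    have hzero : ∀ v : n → ℝ, star v ⬝ᵥ ((star M * M - 1) *ᵥ v) = 0 := fun v ↦ by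
      have := hM v
      rw [sub_mulVec, dotProduct_sub, ← mulVec_mulVec, one_mulVec, dotProduct_mulVec,
        star_eq_conjTranspose, ← star_mulVec]
      simpa [dotProduct, ← pow_two, sub_eq_zero] using this
    refine sub_eq_zero.1 (le_antisymm ?_ ?_)
    · refine neg_nonneg.1 (PosSemidef.of_dotProduct_mulVec_nonneg hherm.neg fun v ↦ ?_).nonneg
      rw [neg_mulVec, dotProduct_neg, hzero, neg_zero]
    · exact (PosSemidef.of_dotProduct_mulVec_nonneg hherm fun v ↦ (hzero v).ge).nonneg
  exact Unitary.mem_iff.2 ⟨hself, mul_eq_one_comm.1 hself⟩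

theorem OperatorMonotone.sum_mul_sq_mulVec_le {f : ℝ → ℝ} (hf : OperatorMonotone f) {n : ℕ}
    {M : Matrix (Fin n) (Fin n) ℝ} (hM : ∀ v, ∑ i, (M *ᵥ v) i ^ 2 = ∑ i, v i ^ 2)
    {α β : Fin n → ℝ} (hα : 0 ≤ α) (hβ : 0 ≤ β)
    (h : ∀ v, ∑ i, α i * v i ^ 2 ≤ ∑ i, β i * (M *ᵥ v) i ^ 2) (v : Fin n → ℝ) :
    ∑ i, f (α i) * v i ^ 2 ≤ ∑ i, f (β i) * (M *ᵥ v) i ^ 2 := by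
  let U : unitary (Matrix (Fin n) (Fin n) ℝ) := star ⟨M, mem_unitary_of_sum_sq_mulVec hM⟩
  have hform : ∀ a b v : Fin n → ℝ,
      star v ⬝ᵥ ((conjStarAlgAut ℝ _ U (diagonal b) - conjStarAlgAut ℝ _ 1 (diagonal a)) *ᵥ v) =
        ∑ i, b i * (M *ᵥ v) i ^ 2 - ∑ i, a i * v i ^ 2 := fun a b v ↦ by
    rw [sub_mulVec, dotProduct_sub, star_dotProduct_conjStarAlgAut_mulVec,
      star_dotProduct_conjStarAlgAut_mulVec]
    simp [U]
  have hpos := (hf.posSemidef_conjStarAlgAut_diagonal_sub 1 U hα hβ <|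
    .of_dotProduct_mulVec_nonneg ((isHermitian_conjStarAlgAut_diagonal _ _).sub
      (isHermitian_conjStarAlgAut_diagonal _ _)) fun v ↦ by
        rw [hform]; exact sub_nonneg.2 (h v)).dotProduct_mulVec_nonneg v
  rw [hform] at hpos
  exact sub_nonneg.1 hpos

end Contraction

theorem OperatorMonotone.sum_mul_sq_le {f : ℝ → ℝ} (hf : OperatorMonotone f)
    {E ι κ : Type*} [AddCommGroup E] [Module ℝ E] [Fintype ι] [Fintype κ]
    (V : E ≃ₗ[ℝ] (ι → ℝ)) (W : E ≃ₗ[ℝ] (κ → ℝ)) {α : ι → ℝ} {β : κ → ℝ} (hα : 0 ≤ α) (hβ : 0 ≤ β)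
    (hnorm : ∀ a, ∑ i, W a i ^ 2 = ∑ i, V a i ^ 2)
    (hform : ∀ a, ∑ i, α i * V a i ^ 2 ≤ ∑ i, β i * W a i ^ 2) (a : E) :
    ∑ i, f (α i) * V a i ^ 2 ≤ ∑ i, f (β i) * W a i ^ 2 := by
  classical
  have hcard : Fintype.card κ = Fintype.card ι := by
    simpa using (W.symm ≪≫ₗ V).finrank_eq
  let e := (Fintype.equivFin ι).symm
  let e' := (Fintype.equivFinOfCardEq hcard).symm
  let V' := V ≪≫ₗ LinearEquiv.funCongrLeft ℝ ℝ e
  let W' := W ≪≫ₗ LinearEquiv.funCongrLeft ℝ ℝ e'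
  let M := LinearMap.toMatrix' (V'.symm ≪≫ₗ W').toLinearMap
  have hM : ∀ b, M.mulVec (V' b) = W' b := fun b ↦ by simp [M, LinearMap.toMatrix'_mulVec]
  have hV : ∀ (g : ι → ℝ) b, ∑ i, g (e i) * V' b i ^ 2 = ∑ i, g i * V b i ^ 2 :=
    fun g b ↦ e.sum_comp fun i ↦ g i * V b i ^ 2
  have hW : ∀ (g : κ → ℝ) b, ∑ i, g (e' i) * W' b i ^ 2 = ∑ i, g i * W b i ^ 2 :=
    fun g b ↦ e'.sum_comp fun i ↦ g i * W b i ^ 2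
  have hM_norm : ∀ v, ∑ i, (M.mulVec v) i ^ 2 = ∑ i, v i ^ 2 := V'.surjective.forall.2 fun b ↦ by
    have hV_one := hV 1 b
    have hW_one := hW 1 b
    simp only [Pi.one_apply, one_mul] at hV_one hW_one
    rw [hM, hV_one, hW_one, hnorm]
  have hM_form : ∀ v, ∑ i, α (e i) * v i ^ 2 ≤ ∑ i, β (e' i) * (M.mulVec v) i ^ 2 :=
    V'.surjective.forall.2 fun b ↦ by simpa only [hM, hV, hW] using hform b
  calc ∑ i, f (α i) * V a i ^ 2 = ∑ i, f (α (e i)) * V' a i ^ 2 := (hV (f ∘ α) a).symm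
    _ ≤ ∑ i, f (β (e' i)) * W' a i ^ 2 := hM a ▸
        hf.sum_mul_sq_mulVec_le hM_norm (fun i ↦ hα (e i)) (fun i ↦ hβ (e' i)) hM_form (V' a)
    _ = ∑ i, f (β i) * W a i ^ 2 := hW (f ∘ β) a

section Quadrature

open Polynomial

/-- Evaluation of polynomials of degree less than `m` at the nodes `s`, scaled by `√|w x|` so that
the Euclidean norm of the values is the quadratic form `a ↦ ∑ x ∈ s, |w x| * a(x)²`. -/
noncomputable def weightedEval (m : ℕ) (w : ℝ → ℝ) (s : Finset ℝ) :
    degreeLT ℝ m →ₗ[ℝ] (s → ℝ) :=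
  LinearMap.pi fun x ↦ √|w x| • leval (x : ℝ) ∘ₗ (degreeLT ℝ m).subtype

theorem weightedEval_apply {m : ℕ} {w : ℝ → ℝ} {s : Finset ℝ} (a : degreeLT ℝ m) (x : s) :
    weightedEval m w s a x = √|w x| * (a : ℝ[X]).eval (x : ℝ) :=
  rfl

theorem sum_mul_weightedEval_sq {m : ℕ} (w g : ℝ → ℝ) (s : Finset ℝ) (a : degreeLT ℝ m) :
    ∑ x : s, g x * weightedEval m w s a x ^ 2 = ∑ x ∈ s, |w x| * (g x * (a : ℝ[X]).eval x ^ 2) := by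
  rw [← Finset.sum_coe_sort s]
  refine Finset.sum_congr rfl fun x _ ↦ ?_
  rw [weightedEval_apply, mul_pow, Real.sq_sqrt (abs_nonneg _)]
  ring

theorem sum_mul_sq_eval_eq_sub {m : ℕ} (w g : ℝ → ℝ) (S : Finset ℝ) (a : degreeLT ℝ m) :
    ∑ x ∈ S, w x * (g x * (a : ℝ[X]).eval x ^ 2) =
      ∑ x : {x ∈ S | 0 < w x}, g x * weightedEval m w _ a x ^ 2 -
        ∑ x : {x ∈ S | w x < 0}, g x * weightedEval m w _ a x ^ 2 := by
  rw [sum_mul_weightedEval_sq w g, sum_mul_weightedEval_sq w g, Finset.sum_filter,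
    Finset.sum_filter, ← Finset.sum_sub_distrib]
  refine Finset.sum_congr rfl fun x _ ↦ ?_
  rcases lt_trichotomy (w x) 0 with h | h | h
  · simp [h, h.not_gt, abs_of_neg h]
  · simp [h]
  · simp [h, h.not_gt, abs_of_pos h]

theorem eq_zero_of_sum_mul_sq_eval_eq_zero {S P : Finset ℝ} {w : ℝ → ℝ}
    (hneg : ∀ x ∈ S, x ∉ P → w x < 0) {a : ℝ[X]} (ha : a.degree < S.card)
    (hsum : ∑ x ∈ S, w x * a.eval x ^ 2 = 0) (hP : ∀ x ∈ P, a.eval x = 0) : a = 0 := by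
  have hnonpos : ∀ x ∈ S, w x * a.eval x ^ 2 ≤ 0 := fun x hx ↦ by
    by_cases hxP : x ∈ P
    · simp [hP x hxP]
    · exact mul_nonpos_of_nonpos_of_nonneg (hneg x hx hxP).le (sq_nonneg _)
  refine eq_zero_of_degree_lt_of_eval_finset_eq_zero S ha fun x hx ↦ ?_
  by_cases hxP : x ∈ P
  · exact hP x hxP
  · simpa [(hneg x hx hxP).ne] using (Finset.sum_eq_zero_iff_of_nonpos hnonpos).1 hsum x hx

theorem weightedEval_eq_zero_iff {m : ℕ} {w : ℝ → ℝ} {s : Finset ℝ} (hw : ∀ x ∈ s, w x ≠ 0)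
    {a : degreeLT ℝ m} : weightedEval m w s a = 0 ↔ ∀ x ∈ s, (a : ℝ[X]).eval x = 0 := by
  simp only [funext_iff, weightedEval_apply, Pi.zero_apply, Subtype.forall, mul_eq_zero]
  refine forall₂_congr fun x hx ↦ or_iff_right ?_
  simpa using hw x hx

theorem weightedEval_injective {m : ℕ} {w : ℝ → ℝ} {S P : Finset ℝ} (hm : m ≤ S.card)
    (hP : ∀ x ∈ P, w x ≠ 0) (hneg : ∀ x ∈ S, x ∉ P → w x < 0)
    (hnorm : ∀ a : degreeLT ℝ m, ∑ x ∈ S, w x * (a : ℝ[X]).eval x ^ 2 = 0) :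
    Function.Injective (weightedEval m w P) :=
  (injective_iff_map_eq_zero _).2 fun a ha ↦ Subtype.ext <|
    eq_zero_of_sum_mul_sq_eval_eq_zero hneg
      ((mem_degreeLT.1 a.2).trans_le (by exact_mod_cast hm)) (hnorm a)
      ((weightedEval_eq_zero_iff hP).1 ha)

theorem weightedEval_neg (m : ℕ) (w : ℝ → ℝ) (s : Finset ℝ) :
    weightedEval m (-w) s = weightedEval m w s := by
  simp only [weightedEval, Pi.neg_apply, abs_neg]

theorem finrank_degreeLT (m : ℕ) : Module.finrank ℝ (degreeLT ℝ m) = m := by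
  rw [(degreeLTEquiv ℝ m).finrank_eq, Module.finrank_fin_fun]

theorem OperatorMonotone.sum_mul_sq_eval_nonneg {f : ℝ → ℝ} (hf : OperatorMonotone f)
    {S : Finset ℝ} (hS : ∀ x ∈ S, 0 ≤ x) {m : ℕ} (hm : S.card = 2 * m) {w : ℝ → ℝ}
    (hw : ∀ x ∈ S, w x ≠ 0)
    (hnorm : ∀ a : degreeLT ℝ m, ∑ x ∈ S, w x * (a : ℝ[X]).eval x ^ 2 = 0)
    (hform : ∀ a : degreeLT ℝ m, 0 ≤ ∑ x ∈ S, w x * (x * (a : ℝ[X]).eval x ^ 2))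
    (a : degreeLT ℝ m) :
    0 ≤ ∑ x ∈ S, w x * (f x * (a : ℝ[X]).eval x ^ 2) := by
  set P := {x ∈ S | 0 < w x}
  set N := {x ∈ S | w x < 0}
  have hP_inj : Function.Injective (weightedEval m w P) :=
    weightedEval_injective (by omega) (by simp +contextual [P, ne_of_gt])
      (fun x hx hxP ↦ lt_of_le_of_ne (by simpa [P, hx] using hxP) (hw x hx)) hnorm
  have hN_inj : Function.Injective (weightedEval m w N) := by
    rw [← weightedEval_neg]
    exact weightedEval_injective (by omega) (by simp +contextual [N, ne_of_lt])
      (fun x hx hxN ↦ neg_neg_iff_pos.2 <|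
        lt_of_le_of_ne (by simpa [N, hx] using hxN) (hw x hx).symm) (by simpa using hnorm)
  have hP_card := LinearMap.finrank_le_finrank_of_injective hP_inj
  have hN_card := LinearMap.finrank_le_finrank_of_injective hN_inj
  have hcard : P.card + N.card ≤ S.card := by
    rw [← Finset.card_union_of_disjoint
      (Finset.disjoint_filter.2 fun x _ hpos hneg ↦ hpos.not_gt hneg)]
    exact Finset.card_le_card (Finset.union_subset (S.filter_subset _) (S.filter_subset _))
  simp only [finrank_degreeLT, Module.finrank_fintype_fun_eq_card, Fintype.card_coe]
    at hP_card hN_card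
  let W := LinearEquiv.ofInjectiveOfFinrankEq _ hP_inj
    (by simp only [finrank_degreeLT, Module.finrank_fintype_fun_eq_card, Fintype.card_coe]; omega)
  let V := LinearEquiv.ofInjectiveOfFinrankEq _ hN_inj
    (by simp only [finrank_degreeLT, Module.finrank_fintype_fun_eq_card, Fintype.card_coe]; omega)
  have hVW : ∀ b, ∑ x, W b x ^ 2 = ∑ x, V b x ^ 2 := fun b ↦ by
    have := sum_mul_sq_eval_eq_sub w 1 S b
    simp only [Pi.one_apply, one_mul, hnorm] at this
    exact sub_eq_zero.1 this.symm
  rw [sum_mul_sq_eval_eq_sub, sub_nonneg]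
  refine hf.sum_mul_sq_le V W (α := (↑)) (β := (↑)) (fun x ↦ hS x (Finset.mem_filter.1 x.2).1)
    (fun x ↦ hS x (Finset.mem_filter.1 x.2).1) hVW (fun b ↦ ?_) a
  exact sub_nonneg.1 (sum_mul_sq_eval_eq_sub w (fun x ↦ x) S b ▸ hform b)

theorem sum_nodalWeight_mul_eval {F : Type*} [Field F] [DecidableEq F] {S : Finset F} {p : F[X]}
    (hp : p.degree < S.card) :
    ∑ x ∈ S, Lagrange.nodalWeight S id x * p.eval x = p.coeff (S.card - 1) := by
  rw [Lagrange.coeff_eq_sum Function.injective_id.injOn hp]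
  refine Finset.sum_congr rfl fun x _ ↦ ?_
  rw [Lagrange.nodalWeight, Finset.prod_inv_distrib, id, div_eq_mul_inv, mul_comm]

theorem OperatorMonotone.sum_nodalWeight_mul_sq_eval_nonneg {f : ℝ → ℝ} (hf : OperatorMonotone f)
    {S : Finset ℝ} (hS : ∀ x ∈ S, 0 ≤ x) {m : ℕ} (hm : S.card = 2 * m) {a : ℝ[X]}
    (ha : a.degree < m) :
    0 ≤ ∑ x ∈ S, Lagrange.nodalWeight S id x * (f x * a.eval x ^ 2) := by
  rcases m.eq_zero_or_pos with rfl | hm_pos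
  · simp [Finset.card_eq_zero.1 hm]
  have hdeg : ∀ a : degreeLT ℝ m, (a : ℝ[X]).natDegree ≤ m - 1 := fun a ↦
    natDegree_le_iff_coeff_eq_zero.2 fun k hk ↦
      (degree_lt_iff_coeff_zero _ _).1 (mem_degreeLT.1 a.2) k (by omega)
  refine hf.sum_mul_sq_eval_nonneg hS hm
    (fun x hx ↦ Lagrange.nodalWeight_ne_zero Function.injective_id.injOn hx) (fun b ↦ ?_)
    (fun b ↦ ?_) ⟨a, mem_degreeLT.2 ha⟩
  · have hsq : ((b : ℝ[X]) ^ 2).natDegree < S.card - 1 :=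
      (natDegree_pow_le_of_le 2 (hdeg b)).trans_lt (by omega)
    simp only [← eval_pow]
    rw [sum_nodalWeight_mul_eval (degree_le_natDegree.trans_lt (by exact_mod_cast (by omega))),
      coeff_eq_zero_of_natDegree_lt hsq]
  · have hsq : (X * (b : ℝ[X]) ^ 2).natDegree < S.card :=
      (natDegree_mul_le_of_le natDegree_X_le (natDegree_pow_le_of_le 2 (hdeg b))).trans_lt
        (by omega)
    have hsum := sum_nodalWeight_mul_eval (S := S) (degree_le_natDegree.trans_lt
      (by exact_mod_cast hsq))
    simp only [eval_mul, eval_X, eval_pow] at hsum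
    rw [hsum, show S.card - 1 = 2 * (m - 1) + 1 by omega, coeff_X_mul,
      coeff_pow_of_natDegree_le (hdeg b)]
    positivity

end Quadrature

section HalfLineCone

open Polynomial
open scoped Pointwise

/-- The real polynomials `∑ pᵢ² + X * ∑ qⱼ²` in which every summand has degree at most `d`; these
certify nonnegativity on `(0, ∞)`. -/
noncomputable def halfLineCone (d : ℕ) : AddSubmonoid ℝ[X] :=
  AddSubmonoid.closure ({q | ∃ p : ℝ[X], 2 * p.natDegree ≤ d ∧ q = p ^ 2} ∪
    {q | ∃ p : ℝ[X], 2 * p.natDegree + 1 ≤ d ∧ q = X * p ^ 2})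

variable {d e : ℕ} {p q : ℝ[X]}

theorem sq_mem_halfLineCone (h : 2 * p.natDegree ≤ d) : p ^ 2 ∈ halfLineCone d :=
  AddSubmonoid.subset_closure (Or.inl ⟨p, h, rfl⟩)

theorem X_mul_sq_mem_halfLineCone (h : 2 * p.natDegree + 1 ≤ d) : X * p ^ 2 ∈ halfLineCone d :=
  AddSubmonoid.subset_closure (Or.inr ⟨p, h, rfl⟩)

theorem C_mem_halfLineCone {c : ℝ} (hc : 0 ≤ c) : C c ∈ halfLineCone d := by
  simpa [← C_pow, Real.sq_sqrt hc] using sq_mem_halfLineCone (p := C √c) (d := d) (by simp)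

theorem halfLineCone_mono (h : d ≤ e) : halfLineCone d ≤ halfLineCone e :=
  (AddSubmonoid.closure_le).2 <| Set.union_subset
    (fun _ ⟨_, hp, hq⟩ ↦ hq ▸ sq_mem_halfLineCone (hp.trans h))
    (fun _ ⟨_, hp, hq⟩ ↦ hq ▸ X_mul_sq_mem_halfLineCone (hp.trans h))

theorem mul_mem_halfLineCone (hp : p ∈ halfLineCone d) (hq : q ∈ halfLineCone e) :
    p * q ∈ halfLineCone (d + e) := by
  refine (?_ : halfLineCone d * halfLineCone e ≤ halfLineCone (d + e))
    (AddSubmonoid.mul_mem_mul hp hq)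
  rw [halfLineCone, halfLineCone, AddSubmonoid.closure_mul_closure, AddSubmonoid.closure_le]
  rintro _ ⟨_, ⟨a, ha, rfl⟩ | ⟨a, ha, rfl⟩, _, ⟨b, hb, rfl⟩ | ⟨b, hb, rfl⟩, rfl⟩ <;>
    have hab := natDegree_mul_le (p := a) (q := b) <;> dsimp only
  · rw [← mul_pow]
    exact sq_mem_halfLineCone (by omega)
  · rw [mul_left_comm, ← mul_pow]
    exact X_mul_sq_mem_halfLineCone (by omega)
  · rw [mul_assoc, ← mul_pow]
    exact X_mul_sq_mem_halfLineCone (by omega)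
  · rw [mul_mul_mul_comm, ← sq, ← mul_pow, ← mul_pow]
    have hX := natDegree_mul_le_of_le natDegree_X_le hab
    exact sq_mem_halfLineCone (by omega)

theorem eval_nonneg_of_mem_halfLineCone (hq : q ∈ halfLineCone d) {x : ℝ} (hx : 0 < x) :
    0 ≤ q.eval x := by
  induction hq using AddSubmonoid.closure_induction with
  | zero => simp
  | add a b _ _ ha hb => simpa using add_nonneg ha hb
  | mem q hq =>
    obtain ⟨p, -, rfl⟩ | ⟨p, -, rfl⟩ := hq <;> simp only [eval_mul, eval_X, eval_pow] <;> positivity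

theorem eval_nonneg_of_eval_mul_nonneg (hp : p ≠ 0) (hp_nonneg : ∀ x : ℝ, 0 < x → 0 ≤ p.eval x)
    (hpq : ∀ x : ℝ, 0 < x → 0 ≤ (p * q).eval x) {x : ℝ} (hx : 0 < x) : 0 ≤ q.eval x := by
  have hlim : Filter.Tendsto q.eval (nhdsWithin x {x}ᶜ) (nhds (q.eval x)) :=
    q.continuous.continuousAt.mono_left nhdsWithin_le_nhds
  have hpos : ∀ᶠ y in nhdsWithin x {x}ᶜ, 0 < y := nhdsWithin_le_nhds (lt_mem_nhds hx)
  have hroot : ∀ᶠ y in nhdsWithin x {x}ᶜ, ¬ p.IsRoot y :=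
    nhdsNE_le_cofinite _ (finite_setOfPred_isRoot hp).eventually_cofinite_notMem
  refine ge_of_tendsto hlim ?_
  filter_upwards [hpos, hroot] with y hy hpy
  exact nonneg_of_mul_nonneg_right (eval_mul (R := ℝ) ▸ hpq y hy)
    ((hp_nonneg y hy).lt_of_ne' hpy)

theorem sq_X_sub_C_dvd_of_eval_nonneg (hq : ∀ x : ℝ, 0 < x → 0 ≤ q.eval x) {r : ℝ} (hr : 0 < r)
    (hroot : q.IsRoot r) : (X - C r) ^ 2 ∣ q := by
  rcases eq_or_ne q 0 with rfl | hq0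
  · exact dvd_zero _
  have hmin : IsLocalMin (fun x ↦ q.eval x) r := by
    filter_upwards [lt_mem_nhds hr] with x hx
    exact hroot.eq_zero.trans_le (hq x hx)
  have hderiv : q.derivative.IsRoot r := q.deriv.symm.trans hmin.deriv_eq_zero
  exact (le_rootMultiplicity_iff hq0).1
    ((one_lt_rootMultiplicity_iff_isRoot hq0).2 ⟨hroot, hderiv⟩)

theorem exists_dvd_mem_halfLineCone (hq : ∀ x : ℝ, 0 < x → 0 ≤ q.eval x) (hdeg : q.natDegree ≠ 0) :
    ∃ p, p ∣ q ∧ p.natDegree ≠ 0 ∧ p ∈ halfLineCone p.natDegree := by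
  obtain ⟨z, hz⟩ := IsAlgClosed.exists_aeval_eq_zero ℂ q
    (fun h ↦ hdeg (natDegree_eq_of_degree_eq_some h))
  by_cases him : z.im = 0
  · have hroot : q.IsRoot z.re := by
      rw [← Complex.re_add_im z, him, Complex.ofReal_zero, zero_mul, add_zero] at hz
      exact Complex.ofReal_eq_zero.1 ((aeval_algebraMap_apply ℂ z.re q).symm.trans hz)
    rcases le_or_gt z.re 0 with hre | hre
    · refine ⟨X - C z.re, dvd_iff_isRoot.2 hroot, by simp, ?_⟩
      rw [natDegree_X_sub_C, sub_eq_add_neg, ← C_neg]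
      exact add_mem (by simpa using X_mul_sq_mem_halfLineCone (p := 1) (d := 1) (by simp))
        (C_mem_halfLineCone (neg_nonneg.2 hre))
    · exact ⟨(X - C z.re) ^ 2, sq_X_sub_C_dvd_of_eval_nonneg hq hre hroot, by simp,
        sq_mem_halfLineCone (by simp)⟩
  · have hquad : X ^ 2 - C (2 * z.re) * X + C (‖z‖ ^ 2) = (X - C z.re) ^ 2 + C (z.im ^ 2) := by
      rw [← Complex.normSq_eq_norm_sq, Complex.normSq_apply]
      simp only [map_add, map_mul, map_pow, map_ofNat]
      ring
    have hnat : ((X - C z.re) ^ 2 + C (z.im ^ 2)).natDegree = 2 := by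
      rw [natDegree_add_C, natDegree_pow, natDegree_X_sub_C]
    refine ⟨_, hquad ▸ quadratic_dvd_of_aeval_eq_zero_im_ne_zero q hz him, by omega, ?_⟩
    rw [hnat]
    exact add_mem (sq_mem_halfLineCone (by simp)) (C_mem_halfLineCone (sq_nonneg _))

theorem mem_halfLineCone_of_eval_nonneg (hq : ∀ x : ℝ, 0 < x → 0 ≤ q.eval x) :
    q ∈ halfLineCone q.natDegree := by
  induction hn : q.natDegree using Nat.strong_induction_on generalizing q with
  | _ n ih =>
    subst hn
    rcases eq_or_ne q.natDegree 0 with h0 | h0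
    · rw [eq_C_of_natDegree_eq_zero h0] at hq ⊢
      exact C_mem_halfLineCone (by simpa using hq 1 one_pos)
    obtain ⟨p, ⟨k, rfl⟩, hp_deg, hp⟩ := exists_dvd_mem_halfLineCone hq h0
    have hp0 : p ≠ 0 := by rintro rfl; simp at hp_deg
    have hk0 : k ≠ 0 := by rintro rfl; simp at h0
    rw [natDegree_mul hp0 hk0] at ih ⊢
    exact mul_mem_halfLineCone hp <| ih k.natDegree (by omega)
      (fun x hx ↦ eval_nonneg_of_eval_mul_nonneg hp0
        (fun y hy ↦ eval_nonneg_of_mem_halfLineCone hp hy) hq hx) rfl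

end HalfLineCone

section KernelSpan

open Polynomial

theorem nodalWeight_insert {F ι : Type*} [Field F] [DecidableEq ι] {s : Finset ι} {v : ι → F}
    {i j : ι} (hi : i ∈ s) (hj : j ∉ s) :
    Lagrange.nodalWeight (insert j s) v i = (v i - v j)⁻¹ * Lagrange.nodalWeight s v i := by
  rw [Lagrange.nodalWeight, Finset.erase_insert_of_ne (ne_of_mem_of_not_mem hi hj).symm,
    Finset.prod_insert (mt Finset.mem_of_mem_erase hj), Lagrange.nodalWeight]

theorem nodalWeight_neg {F ι : Type*} [Field F] [DecidableEq ι] {s : Finset ι} {v : ι → F} {i : ι}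
    (hi : i ∈ s) (hs : Odd s.card) :
    Lagrange.nodalWeight s (-v) i = Lagrange.nodalWeight s v i := by
  simp only [Lagrange.nodalWeight, Pi.neg_apply, neg_sub_neg, ← neg_sub (v i), inv_neg]
  rw [Finset.prod_neg, Finset.card_erase_of_mem hi, (Nat.Odd.sub_odd hs odd_one).neg_one_pow,
    one_mul]

variable {f : ℝ → ℝ} {T : Finset ℝ} {m : ℕ}

theorem OperatorMonotone.sum_nodalWeight_insert_nonneg (hf : OperatorMonotone f)
    (hT : ∀ x ∈ T, 0 ≤ x) (hm : T.card + 1 = 2 * m) {z : ℝ} (hz : 0 ≤ z) (hzT : z ∉ T) {a : ℝ[X]}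
    (ha : a.degree < m) :
    0 ≤ Lagrange.nodalWeight (insert z T) id z * (f z * a.eval z ^ 2) +
      ∑ x ∈ T, (x - z)⁻¹ * Lagrange.nodalWeight T id x * (f x * a.eval x ^ 2) := by
  have h := hf.sum_nodalWeight_mul_sq_eval_nonneg (S := insert z T)
    (Finset.forall_mem_insert _ _ _ |>.2 ⟨hz, hT⟩) (by rw [Finset.card_insert_of_notMem hzT, hm]) ha
  rw [Finset.sum_insert hzT] at h
  refine h.trans_eq (congrArg _ (Finset.sum_congr rfl fun x hx ↦ ?_))
  rw [nodalWeight_insert hx hzT, id, id]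

theorem OperatorMonotone.sum_nodalWeight_inv_mul_sq_nonneg (hf : OperatorMonotone f) (h0 : 0 ≤ f 0)
    (hT : ∀ x ∈ T, 0 < x) (hm : T.card + 1 = 2 * m) {a : ℝ[X]} (ha : a.degree < m) :
    0 ≤ ∑ x ∈ T, Lagrange.nodalWeight T id x * (x⁻¹ * f x * a.eval x ^ 2) := by
  have h0T : (0 : ℝ) ∉ T := fun h ↦ (hT 0 h).false
  have hweight : Lagrange.nodalWeight (insert 0 T) id (0 : ℝ) ≤ 0 := by
    simp only [Lagrange.nodalWeight, Finset.erase_insert h0T, id, zero_sub, inv_neg]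
    rw [Finset.prod_neg, Odd.neg_one_pow ⟨m - 1, by omega⟩, neg_one_mul, neg_nonpos]
    exact Finset.prod_nonneg fun x hx ↦ (inv_pos.2 (hT x hx)).le
  have h := hf.sum_nodalWeight_insert_nonneg (fun x hx ↦ (hT x hx).le) hm le_rfl h0T ha
  have hzero := mul_nonpos_of_nonpos_of_nonneg hweight (mul_nonneg h0 (sq_nonneg (a.eval 0)))
  calc 0 ≤ ∑ x ∈ T, (x - 0)⁻¹ * Lagrange.nodalWeight T id x * (f x * a.eval x ^ 2) := by linarith
    _ = _ := Finset.sum_congr rfl fun x _ ↦ by rw [sub_zero]; ring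

theorem OperatorMonotone.sum_nodalWeight_mul_sq_nonpos (hf : OperatorMonotone f)
    (hT : ∀ x ∈ T, 0 ≤ x) (hm : T.card + 1 = 2 * m) {b : ℝ[X]} (hb : b.natDegree + 1 < m) :
    ∑ x ∈ T, Lagrange.nodalWeight T id x * (f x * b.eval x ^ 2) ≤ 0 := by
  have hbound : ∀ᶠ z in Filter.atTop,
      z * ∑ x ∈ T, Lagrange.nodalWeight T id x * (f x * b.eval x ^ 2) ≤
        ∑ x ∈ T, x * (Lagrange.nodalWeight T id x * (f x * b.eval x ^ 2)) := by
    filter_upwards [Filter.eventually_ge_atTop 0,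
      (Finset.eventually_all T).2 fun x _ ↦ Filter.eventually_gt_atTop x] with z hz hzT
    have hdeg : (b * (X - C z)).natDegree < m :=
      (natDegree_mul_le_of_le le_rfl (natDegree_X_sub_C_le z)).trans_lt hb
    have h := hf.sum_nodalWeight_insert_nonneg hT hm hz (fun h ↦ (hzT z h).false)
      (degree_le_natDegree.trans_lt (by exact_mod_cast hdeg))
    simp only [eval_mul, eval_sub, eval_X, eval_C, sub_self, mul_zero, zero_pow two_ne_zero,
      zero_add] at h
    rw [← sub_nonneg, Finset.mul_sum, ← Finset.sum_sub_distrib]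
    refine h.trans_eq (Finset.sum_congr rfl fun x hx ↦ ?_)
    have := sub_ne_zero.2 (hzT x hx).ne
    field_simp
  by_contra! hpos
  obtain ⟨z, hz, hz'⟩ := (hbound.and <|
    (Filter.tendsto_id.atTop_mul_const hpos).eventually_gt_atTop _).exists
  exact hz.not_gt hz'

theorem OperatorMonotone.sum_nodalWeight_mul_eval_neg_nonneg (hf : OperatorMonotone f)
    (h0 : 0 ≤ f 0) (hT : ∀ x ∈ T, 0 < x) (hodd : Odd T.card) {q : ℝ[X]}
    (hq : q ∈ halfLineCone (T.card - 1)) :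
    0 ≤ ∑ x ∈ T, Lagrange.nodalWeight T id x * (x⁻¹ * f x * q.eval (-x)) := by
  obtain ⟨m, hm⟩ := hodd.add_odd odd_one
  rw [← two_mul] at hm
  induction hq using AddSubmonoid.closure_induction with
  | zero => simp
  | add p q _ _ hp hq => simpa [mul_add, Finset.sum_add_distrib] using add_nonneg hp hq
  | mem q hq =>
    obtain ⟨p, hp, rfl⟩ | ⟨p, hp, rfl⟩ := hq
    · have hdeg : (p.comp (-X)).natDegree < m := by rw [natDegree_comp]; simp; omega
      simpa using hf.sum_nodalWeight_inv_mul_sq_nonneg (a := p.comp (-X)) h0 hT hm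
        (degree_le_natDegree.trans_lt (by exact_mod_cast hdeg))
    · have hdeg : (p.comp (-X)).natDegree + 1 < m := by rw [natDegree_comp]; simp; omega
      refine (neg_nonneg.2 (hf.sum_nodalWeight_mul_sq_nonpos (fun x hx ↦ (hT x hx).le) hm
        hdeg)).trans_eq ?_
      rw [← Finset.sum_neg_distrib]
      refine Finset.sum_congr rfl fun x hx ↦ ?_
      have := (hT x hx).ne'
      simp only [eval_comp, eval_neg, eval_X, eval_mul, eval_pow]
      field_simp

theorem eval_interpolate_neg (hT : ∀ x ∈ T, 0 < x) (hodd : Odd T.card) (c : ℝ → ℝ) {l : ℝ}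
    (hl : 0 < l) :
    (Lagrange.interpolate T (-id) fun x ↦ c x * x / Lagrange.nodalWeight T id x).eval l =
      (∏ x ∈ T, (l + x)) * ∑ x ∈ T, c x * (x / (x + l)) := by
  rw [Lagrange.eval_interpolate_not_at_node (v := -id) _
    fun x hx ↦ ((neg_neg_of_pos (hT x hx)).trans hl).ne', Lagrange.eval_nodal]
  simp only [Pi.neg_apply, id, sub_neg_eq_add]
  refine congrArg _ (Finset.sum_congr rfl fun x hx ↦ ?_)
  have hD := Lagrange.nodalWeight_ne_zero (v := id) Function.injective_id.injOn hx
  have hlx := (add_pos hl (hT x hx)).ne'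
  rw [nodalWeight_neg hx hodd, add_comm x]
  field_simp

theorem OperatorMonotone.sum_mul_nonneg_of_odd (hf : OperatorMonotone f) (h0 : 0 ≤ f 0)
    (hT : ∀ x ∈ T, 0 < x) (hodd : Odd T.card) {c : ℝ → ℝ}
    (hc : ∀ l, 0 < l → 0 ≤ ∑ x ∈ T, c x * (x / (x + l))) : 0 ≤ ∑ x ∈ T, c x * f x := by
  set q := Lagrange.interpolate T (-id) fun x ↦ c x * x / Lagrange.nodalWeight T id x
  have hq_deg : q.natDegree ≤ T.card - 1 :=
    natDegree_le_iff_degree_le.2 (Lagrange.degree_interpolate_le _ neg_injective.injOn)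
  have hq_nonneg : ∀ l : ℝ, 0 < l → 0 ≤ q.eval l := fun l hl ↦ by
    rw [eval_interpolate_neg hT hodd c hl]
    exact mul_nonneg (Finset.prod_nonneg fun x hx ↦ (add_pos hl (hT x hx)).le) (hc l hl)
  refine (hf.sum_nodalWeight_mul_eval_neg_nonneg h0 hT hodd <|
    halfLineCone_mono hq_deg (mem_halfLineCone_of_eval_nonneg hq_nonneg)).trans_eq ?_
  refine Finset.sum_congr rfl fun x hx ↦ ?_
  have hx0 := (hT x hx).ne'
  have hD := Lagrange.nodalWeight_ne_zero (v := id) Function.injective_id.injOn hx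
  have hq_eval : q.eval (-x) = c x * x / Lagrange.nodalWeight T id x :=
    Lagrange.eval_interpolate_at_node (v := -id) _ neg_injective.injOn hx
  rw [hq_eval]
  field_simp

theorem OperatorMonotone.sum_mul_nonneg (hf : OperatorMonotone f) (h0 : 0 ≤ f 0)
    (hT : ∀ x ∈ T, 0 < x) {c : ℝ → ℝ} (hc : ∀ l, 0 < l → 0 ≤ ∑ x ∈ T, c x * (x / (x + l))) :
    0 ≤ ∑ x ∈ T, c x * f x := by
  rcases T.card.even_or_odd with heven | hodd
  · obtain ⟨z, hz, hzT⟩ := (Set.Ioi_infinite (0 : ℝ)).exists_notMem_finset T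
    have hpad : ∀ g : ℝ → ℝ, ∑ x ∈ insert z T, (if x ∈ T then c x else 0) * g x =
        ∑ x ∈ T, c x * g x := fun g ↦ by
      rw [Finset.sum_insert hzT, if_neg hzT, zero_mul, zero_add]
      exact Finset.sum_congr rfl fun x hx ↦ by rw [if_pos hx]
    rw [← hpad]
    refine hf.sum_mul_nonneg_of_odd h0 (Finset.forall_mem_insert _ _ _ |>.2 ⟨hz, hT⟩)
      (by rw [Finset.card_insert_of_notMem hzT]; exact heven.add_one) fun l hl ↦ ?_
    rw [hpad]
    exact hc l hl
  · exact hf.sum_mul_nonneg_of_odd h0 hT hodd hc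

end KernelSpan

section PositiveExtension

theorem exists_nonneg_comp_eq {V E : Type*} [AddCommGroup V] [Module ℝ V] [AddCommGroup E]
    [PartialOrder E] [IsOrderedAddMonoid E] [Module ℝ E] [PosSMulMono ℝ E] (T : V →ₗ[ℝ] E)
    (F : V →ₗ[ℝ] ℝ) (hpos : ∀ v, 0 ≤ T v → 0 ≤ F v) (hcof : ∀ y, ∃ v, 0 ≤ T v + y) :
    ∃ G : E →ₗ[ℝ] ℝ, G ∘ₗ T = F ∧ ∀ y, 0 ≤ y → 0 ≤ G y := by
  have hker : F ∈ (LinearMap.ker T).dualAnnihilator := by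
    refine (Submodule.mem_dualAnnihilator F).2 fun v hv ↦ ?_
    have hneg := hpos (-v) (by rw [map_neg, LinearMap.mem_ker.1 hv, neg_zero])
    rw [map_neg, neg_nonneg] at hneg
    exact hneg.antisymm (hpos v (LinearMap.mem_ker.1 hv).ge)
  rw [← LinearMap.range_dualMap_eq_dualAnnihilator_ker] at hker
  obtain ⟨F', rfl⟩ := hker
  obtain ⟨G, hG, hG_nonneg⟩ := riesz_extension (PointedCone.positive ℝ E)
    ⟨LinearMap.range T, F'.domRestrict _⟩ (fun ⟨_, v, hv⟩ h ↦ hv ▸ hpos v (hv ▸ h))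
    (fun y ↦ (hcof y).imp' (fun v ↦ ⟨T v, v, rfl⟩) fun _ h ↦ h)
  exact ⟨G, LinearMap.ext fun v ↦ hG ⟨T v, v, rfl⟩, hG_nonneg⟩

variable {K : Type*} [TopologicalSpace K] [T2Space K] [CompactSpace K] [MeasurableSpace K]
  [BorelSpace K]

theorem exists_isFiniteMeasure_integral_eq (G : C(K, ℝ) →ₗ[ℝ] ℝ) (hG : ∀ h, 0 ≤ h → 0 ≤ G h) :
    ∃ ν : Measure K, IsFiniteMeasure ν ∧ ∀ h : C(K, ℝ), ∫ k, h k ∂ν = G h := by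
  let toContinuousMap : CompactlySupportedContinuousMap K ℝ →ₗ[ℝ] C(K, ℝ) :=
    { toFun := fun h ↦ h
      map_add' := fun _ _ ↦ rfl
      map_smul' := fun _ _ ↦ rfl }
  let Λ : CompactlySupportedContinuousMap K ℝ →ₚ[ℝ] ℝ :=
    PositiveLinearMap.mk₀ (G ∘ₗ toContinuousMap) fun h hh ↦ hG h hh
  exact ⟨RealRMK.rieszMeasure Λ, inferInstance, fun h ↦ RealRMK.integral_rieszMeasure Λ
    (CompactlySupportedContinuousMap.continuousMapEquiv h)⟩

theorem exists_isFiniteMeasure_eq_integral {X : Type*} (Φ : X → C(K, ℝ)) (L : X → ℝ)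
    (hΦ : ∃ x, Φ x = 1)
    (hpos : ∀ c, 0 ≤ Finsupp.linearCombination ℝ Φ c → 0 ≤ Finsupp.linearCombination ℝ L c) :
    ∃ ν : Measure K, IsFiniteMeasure ν ∧ ∀ x, L x = ∫ k, Φ x k ∂ν := by
  obtain ⟨x₁, hx₁⟩ := hΦ
  obtain ⟨G, hGL, hG⟩ := exists_nonneg_comp_eq _ _ hpos fun h ↦ by
    obtain ⟨M, hM⟩ := (isCompact_range h.continuous).bddBelow
    refine ⟨Finsupp.single x₁ (-M), fun k ↦ ?_⟩
    simpa [hx₁] using hM ⟨k, rfl⟩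
  obtain ⟨ν, hν, hint⟩ := exists_isFiniteMeasure_integral_eq G hG
  refine ⟨ν, hν, fun x ↦ ?_⟩
  simpa [hint] using (LinearMap.congr_fun hGL (Finsupp.single x 1)).symm

end PositiveExtension

section Representation

theorem phi_ofReal (x : ℝ) {l : ℝ} (hl : 0 < l) :
    phi x (ENNReal.ofReal l) = (l + 1) * (x / (x + l)) := by
  rw [phi, if_neg (ENNReal.ofReal_pos.2 hl).ne', if_neg ofReal_ne_top, toReal_ofReal hl.le]
  ring

theorem OperatorMonotone.linearCombination_nonneg {f : ℝ → ℝ} (hf : OperatorMonotone f)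
    (h0 : 0 ≤ f 0) {c : Set.Ioi (0 : ℝ) →₀ ℝ}
    (hc : ∀ l, 0 ≤ Finsupp.linearCombination ℝ (fun x : Set.Ioi (0 : ℝ) ↦ phi x l) c) :
    0 ≤ Finsupp.linearCombination ℝ (fun x : Set.Ioi (0 : ℝ) ↦ f x) c := by
  set c' := c.embDomain (.subtype _)
  have hsum : ∀ g : ℝ → ℝ, ∑ x ∈ c'.support, c' x * g x = ∑ x ∈ c.support, c x * g x := fun g ↦
    Finsupp.sum_embDomain (g := fun x r ↦ r * g x)
  simp only [Finsupp.linearCombination_apply, Finsupp.sum, smul_eq_mul] at hc ⊢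
  rw [← hsum]
  refine hf.sum_mul_nonneg h0 (fun x hx ↦ ?_) fun l hl ↦ ?_
  · obtain ⟨y, -, rfl⟩ := Finset.mem_map.1 (Finsupp.support_embDomain _ c ▸ hx)
    exact y.2
  · have hl_nonneg := hc (ENNReal.ofReal l)
    simp only [phi_ofReal _ hl, mul_left_comm _ (l + 1)] at hl_nonneg
    rw [← Finset.mul_sum] at hl_nonneg
    rw [hsum fun x ↦ x / (x + l)]
    exact nonneg_of_mul_nonneg_right hl_nonneg (by positivity)

theorem OperatorMonotone.exists_eq_integral_phi_of_pos {f : ℝ → ℝ} (hf : OperatorMonotone f)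
    (h0 : 0 ≤ f 0) :
    ∃ ν : Measure ℝ≥0∞, IsFiniteMeasure ν ∧ ∀ x, 0 < x → f x = ∫ l, phi x l ∂ν := by
  let Φ : Set.Ioi (0 : ℝ) → C(ℝ≥0∞, ℝ) := fun x ↦ ⟨phi x, continuous_phi x.2⟩
  obtain ⟨ν, hν, hint⟩ := exists_isFiniteMeasure_eq_integral Φ (fun x ↦ f x)
    ⟨⟨1, Set.mem_Ioi.2 one_pos⟩, ContinuousMap.ext phi_one_left⟩ fun c hc ↦
      hf.linearCombination_nonneg h0 fun l ↦ by
        simpa [Finsupp.linearCombination_apply, Finsupp.sum, Φ] using ContinuousMap.le_def.1 hc l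
  exact ⟨ν, hν, fun x hx ↦ hint ⟨x, hx⟩⟩

theorem continuousWithinAt_phi_zero (l : ℝ≥0∞) :
    ContinuousWithinAt (fun x ↦ phi x l) (Set.Ici 0) 0 := by
  unfold phi
  split_ifs with h0 htop
  · exact continuousWithinAt_const
  · exact continuousWithinAt_id
  · have : 0 + l.toReal ≠ 0 := by simp [toReal_eq_zero_iff, h0, htop]
    exact ContinuousAt.continuousWithinAt (by fun_prop (disch := assumption))

theorem continuousWithinAt_integral_phi_zero (ν : Measure ℝ≥0∞) [IsFiniteMeasure ν] :
    ContinuousWithinAt (fun x ↦ ∫ l, phi x l ∂ν) (Set.Ici 0) 0 := by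
  refine continuousWithinAt_of_dominated (bound := fun _ ↦ 2)
    (.of_forall fun x ↦ (measurable_phi x).aestronglyMeasurable) ?_ (integrable_const _)
    (.of_forall continuousWithinAt_phi_zero)
  filter_upwards [self_mem_nhdsWithin, nhdsWithin_le_nhds (Iic_mem_nhds one_pos)] with x hx hx1
  refine .of_forall fun l ↦ ?_
  rw [Real.norm_of_nonneg (phi_nonneg hx l)]
  linarith [phi_le_one_add hx l, Set.mem_Iic.1 hx1]

theorem eq_of_continuousWithinAt_Ici {E : Type*} [TopologicalSpace E] [T2Space E] {f g : ℝ → E}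
    {a : ℝ} (hf : ContinuousWithinAt f (Set.Ici a) a) (hg : ContinuousWithinAt g (Set.Ici a) a)
    (hfg : ∀ x, a < x → f x = g x) : f a = g a :=
  tendsto_nhds_unique_of_eventuallyEq (hf.mono_left (nhdsWithin_mono a Set.Ioi_subset_Ici_self))
    (hg.mono_left (nhdsWithin_mono a Set.Ioi_subset_Ici_self))
    (Filter.eventually_of_mem self_mem_nhdsWithin hfg)

end Representation

theorem stmt4_general (f : ℝ → ℝ) (hc : ContinuousWithinAt f (Set.Ici 0) 0) (h0 : 0 ≤ f 0) :
    OperatorMonotone f ↔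
      ∃ ν : Measure ℝ≥0∞, IsFiniteMeasure ν ∧ ∀ x : ℝ, 0 ≤ x → f x = ∫ l, phi x l ∂ν := by
  constructor
  · intro hf
    obtain ⟨ν, hν, hpos⟩ := hf.exists_eq_integral_phi_of_pos h0
    refine ⟨ν, hν, fun x hx ↦ hx.eq_or_lt.elim ?_ (hpos x)⟩
    rintro rfl
    exact eq_of_continuousWithinAt_Ici hc (continuousWithinAt_integral_phi_zero ν) hpos
  · rintro ⟨ν, hν, hint⟩
    exact .of_integral (F := phi) operatorMonotone_phi (fun x hx ↦ integrable_phi hx ν) hint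

theorem stmt4 (f : ℝ → ℝ) (hc : ContinuousOn f (Set.Ici 0))
    (hnn : ∀ x : ℝ, 0 ≤ x → 0 ≤ f x) :
    OperatorMonotone f ↔
      ∃ ν : Measure ℝ≥0∞, IsFiniteMeasure ν ∧ ∀ x : ℝ, 0 ≤ x → f x = ∫ l, phi x l ∂ν :=
  stmt4_general f (hc 0 Set.self_mem_Ici) (hnn 0 le_rfl)
end

section
/- For every t ∈ [0,1], the function x ↦ ( (1 !_t x) + (1 !_{1-t} x) )/2 is an extreme point of the convex set S = { f : [0,∞) → [0,∞) : f is operator monotone, f(1) = 1, and f(x) = x·f(1/x) for all x > 0 }, viewed as a subset of the real vector space of functions from [0,∞) to ℝ. -/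
open MeasureTheory Real ComplexOrder

/-- The `t`-weighted harmonic mean `1 !_t x` of `1` and `x`, for `t ∈ [0,1]`, `x ∈ [0,∞)`. -/
noncomputable def whm (t x : ℝ) : ℝ :=
  if t = 0 ∧ x = 0 then 1 else x / ((1 - t) * x + t)

/-- Extension of a function `f : [0,∞) → ℝ` to all of `ℝ` (by junk value `0` on negatives);
this is the function applied to positive semidefinite matrices via the continuous
functional calculus. -/
noncomputable def ext (f : Set.Ici (0 : ℝ) → ℝ) : ℝ → ℝ :=
  fun x => if h : 0 ≤ x then f ⟨x, Set.mem_Ici.mpr h⟩ else 0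

/-- The reciprocal map on `[0,∞)` (with the junk value `1/0 = 0`). -/
noncomputable def recip (x : Set.Ici (0 : ℝ)) : Set.Ici (0 : ℝ) :=
  ⟨1 / (x : ℝ), Set.mem_Ici.mpr (one_div_nonneg.mpr (Set.mem_Ici.mp x.2))⟩

/-- The convex set of normalized symmetric operator monotone functions from `[0,∞)` to
`[0,∞)`, inside the real vector space of functions from `[0,∞)` to `ℝ`. -/
def Ssym : Set (Set.Ici (0 : ℝ) → ℝ) :=
  {f | (∀ x, 0 ≤ f x) ∧ OperatorMonotone (ext f) ∧
    f ⟨1, Set.mem_Ici.mpr zero_le_one⟩ = 1 ∧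
    ∀ x : Set.Ici (0 : ℝ), 0 < (x : ℝ) → f x = (x : ℝ) * f (recip x)}

/-!
Suppose `q` and `r` are operator monotone on `[0,∞)` and `(q + r) P = N` there, for polynomials `P`
and `N` of degree less than `n`. For interlacing nodes `a 0 < b 0 < a 1 < b 1 < ⋯` in `[0,∞)`,
multiplication by `X` modulo `∏ (X - a i)` and modulo `∏ (X - b i)` on polynomials of degree less
than `n` are, for a suitable inner product, Hermitian matrices `A ≤ B` with spectra `{a i}` and
`{b i}`. Both `(q + r)(A)` and `(q + r)(B)` map the vector of `P` to that of `N`, so this vector is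
in the kernel of the sum of the positive semidefinite matrices `q(B) - q(A)` and `r(B) - r(A)`,
hence of each of them. This says that `q P` interpolates on all `2n` nodes to one polynomial of
degree less than `n`; as the nodes are arbitrary, `q P` is such a polynomial on `[0,∞)`.

If `q + r` is the symmetrized harmonic mean, then `P` has degree at most `2` and `q P` at most three
coefficients. The symmetry `q x = x q(1/x)` determines them up to a common factor, so `q` is
proportional to `q + r`.
-/

section FunctionalCalculus

open Polynomial Matrix

variable {n 𝕜 : Type*} [Fintype n] [RCLike 𝕜]

lemma mulVec_eq_zero_of_add_mulVec_eq_zero {M N : Matrix n n 𝕜} (hM : M.PosSemidef)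
    (hN : N.PosSemidef) {v : n → 𝕜} (h : (M + N) *ᵥ v = 0) : M *ᵥ v = 0 := by
  have hsum : star v ⬝ᵥ M *ᵥ v + star v ⬝ᵥ N *ᵥ v = 0 := by
    rw [← dotProduct_add, ← add_mulVec, h, dotProduct_zero]
  exact (hM.dotProduct_mulVec_zero_iff v).1
    ((add_eq_zero_iff_of_nonneg (hM.dotProduct_mulVec_nonneg v)
      (hN.dotProduct_mulVec_nonneg v)).1 hsum).1

lemma aeval_mulVec_of_mulVec_eq_smul [DecidableEq n] {R S : Type*} [CommSemiring R]
    [CommSemiring S] [Algebra R S] {A : Matrix n n S} {μ : R} {v : n → S}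
    (hv : A *ᵥ v = μ • v) (p : R[X]) :
    aeval A p *ᵥ v = p.eval μ • v := by
  induction p using Polynomial.induction_on with
  | C c => simp [Algebra.algebraMap_eq_smul_one, smul_mulVec]
  | add p q hp hq => simp only [map_add, add_mulVec, hp, hq, eval_add, add_smul]
  | monomial k c ih =>
    rw [pow_succ, ← mul_assoc, map_mul, aeval_X, ← mulVec_mulVec, hv, mulVec_smul, ih, smul_smul,
      eval_mul_X, mul_comm]

variable [DecidableEq n] {A : Matrix n n 𝕜}

lemma continuousOn_spectrum_real (f : ℝ → ℝ) : ContinuousOn f (spectrum ℝ A) :=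
  A.finite_real_spectrum.continuousOn f

lemma cfc_mulVec_of_mulVec_eq_smul (hA : A.IsHermitian) (f : ℝ → ℝ) {μ : ℝ} {v : n → 𝕜}
    (hv : A *ᵥ v = μ • v) : cfc f A *ᵥ v = f μ • v := by
  set S : Finset ℝ := insert μ A.finite_real_spectrum.toFinset with hS
  have hp : ∀ x ∈ S, (Lagrange.interpolate S id f).eval x = f x := fun x hx =>
    Lagrange.eval_interpolate_at_node f (v := id) Function.injective_id.injOn hx
  have hcfc : cfc f A = cfc (Lagrange.interpolate S id f).eval A :=
    cfc_congr fun x hx => (hp x (by simp [hS, hx])).symm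
  rw [hcfc, cfc_polynomial _ A hA.isSelfAdjoint, aeval_mulVec_of_mulVec_eq_smul hv,
    hp μ (by simp [hS])]

lemma cfc_mulVec_of_mulVec_basis {M : Matrix n n 𝕜} (hM : M.IsHermitian)
    (L : ℝ[X] →ₗ[ℝ] (n → 𝕜)) {c : n → ℝ} (hc : Function.Injective c)
    (hL : ∀ j, M *ᵥ L (Lagrange.basis Finset.univ c j) = c j • L (Lagrange.basis Finset.univ c j))
    {f : ℝ → ℝ} {p g : ℝ[X]} (hp : p.degree < Fintype.card n) (hg : g.degree < Fintype.card n)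
    (hfp : ∀ j, f (c j) * p.eval (c j) = g.eval (c j)) :
    cfc f M *ᵥ L p = L g := by
  have expand : ∀ {p : ℝ[X]}, p.degree < Fintype.card n →
      L p = ∑ j, p.eval (c j) • L (Lagrange.basis Finset.univ c j) := fun {p} hp => by
    conv_lhs => rw [Lagrange.eq_interpolate hc.injOn hp, Lagrange.interpolate_apply]
    simp only [← smul_eq_C_mul, map_sum, map_smul]
  rw [expand hp, expand hg, mulVec_sum]
  refine Finset.sum_congr rfl fun j _ => ?_
  rw [mulVec_smul, cfc_mulVec_of_mulVec_eq_smul hM f (hL j), smul_smul, ← hfp, mul_comm]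

end FunctionalCalculus

section Interpolation

open Polynomial Lagrange Finset

variable {F ι : Type*} [Field F]

lemma coeff_basis [DecidableEq ι] {s : Finset ι} {v : ι → F} (hv : Set.InjOn v s) {i : ι}
    (hi : i ∈ s) :
    (Lagrange.basis s v i).coeff (#s - 1) = nodalWeight s v i := by
  rw [← natDegree_basis hv hi, coeff_natDegree, leadingCoeff_basis hv hi, nodalWeight,
    prod_inv_distrib]

lemma X_mul_basis [DecidableEq ι] {s : Finset ι} {v : ι → F} {i : ι} (hi : i ∈ s) :
    X * Lagrange.basis s v i =
      v i • Lagrange.basis s v i + C (nodalWeight s v i) * nodal s v := by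
  have hbasis : Lagrange.basis s v i = C (nodalWeight s v i) * nodal (s.erase i) v := by
    rw [basis_eq_prod_sub_inv_mul_nodal_div hi, nodal_erase_eq_nodal_div hi]
  rw [hbasis, nodal_eq_mul_nodal_erase hi, smul_eq_C_mul]
  ring

lemma exists_degree_lt_eval_eq [Fintype ι] {c : ι → F} (hc : Function.Injective c)
    (y : ι → F) :
    ∃ p : F[X], p.degree < Fintype.card ι ∧ ∀ i, y i = p.eval (c i) := by
  classical
  exact ⟨interpolate univ c y, degree_interpolate_lt y hc.injOn,
    fun i => (eval_interpolate_at_node y hc.injOn (mem_univ i)).symm⟩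

lemma exists_degree_lt_on_of_forall_finset {I : Set F} (hI : I.Infinite) {n m : ℕ} (hnm : n < m)
    {f : F → F}
    (h : ∀ S : Finset F, ↑S ⊆ I → #S = m →
      ∃ p : F[X], p.degree < n ∧ ∀ x ∈ S, f x = p.eval x) :
    ∃ p : F[X], p.degree < n ∧ ∀ x ∈ I, f x = p.eval x := by
  classical
  obtain ⟨T, hTI, rfl⟩ := hI.exists_subset_card_eq n
  have hinj : Set.InjOn id (T : Set F) := Function.injective_id.injOn
  refine ⟨interpolate T id f, degree_interpolate_lt f hinj, fun x hx => ?_⟩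
  obtain ⟨S, hTS, hSI, hS⟩ : ∃ S : Finset F, insert x T ⊆ S ∧ ↑S ⊆ I ∧ #S = m := by
    obtain ⟨S, hTS, hSI, hS⟩ := hI.exists_superset_ncard_eq (s := ↑(insert x T)) (k := m)
      (by simpa [Set.insert_subset_iff] using ⟨hx, hTI⟩) (finite_toSet _)
      (by rw [Set.ncard_coe_finset]; exact (card_insert_le x T).trans hnm)
    lift S to Finset F using Set.finite_of_ncard_ne_zero (by omega)
    exact ⟨S, by exact_mod_cast hTS, hSI, by rwa [Set.ncard_coe_finset] at hS⟩
  obtain ⟨p, hp, hfp⟩ := h S hSI hS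
  rw [← eq_interpolate_of_eval_eq f hinj hp fun y hy =>
    (hfp y (hTS (mem_insert_of_mem hy))).symm]
  exact hfp x (hTS (mem_insert_self x T))

end Interpolation

section OperatorMonotone

open Matrix
open scoped MatrixOrder Ring

variable {f g : ℝ → ℝ}

lemma operatorMonotone_iff : OperatorMonotone f ↔
    ∀ n, MonotoneOn (cfc f : Matrix (Fin n) (Fin n) ℂ → Matrix (Fin n) (Fin n) ℂ)
      (Set.Ici 0) :=
  ⟨fun h n A hA B hB =>
      h n A B (nonneg_iff_posSemidef.1 hA) (nonneg_iff_posSemidef.1 hB),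
    fun h n _ _ hA hB hAB => h n hA.nonneg hB.nonneg hAB⟩

namespace OperatorMonotone

protected lemma congr (hf : OperatorMonotone f) (h : Set.EqOn f g (Set.Ici 0)) :
    OperatorMonotone g :=
  operatorMonotone_iff.2 fun n => (operatorMonotone_iff.1 hf n).congr fun _ hA =>
    cfc_congr fun _ hx => h (spectrum_nonneg_of_nonneg hA hx)

protected lemma const (c : ℝ) : OperatorMonotone fun _ => c := by
  refine operatorMonotone_iff.2 fun n A hA B hB _ => ?_
  rw [cfc_const c A hA.isSelfAdjoint, cfc_const c B hB.isSelfAdjoint]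

protected lemma id : OperatorMonotone fun x => x := by
  refine operatorMonotone_iff.2 fun n A hA B hB hAB => ?_
  rwa [cfc_id' ℝ A hA.isSelfAdjoint, cfc_id' ℝ B hB.isSelfAdjoint]

protected lemma add (hf : OperatorMonotone f) (hg : OperatorMonotone g) :
    OperatorMonotone fun x => f x + g x := by
  refine operatorMonotone_iff.2 fun n => ?_
  have hcfc : (cfc fun x => f x + g x) =
      fun A : Matrix (Fin n) (Fin n) ℂ => cfc f A + cfc g A := funext fun A =>
    cfc_add A f g (continuousOn_spectrum_real f) (continuousOn_spectrum_real g)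
  rw [hcfc]
  exact (operatorMonotone_iff.1 hf n).add (operatorMonotone_iff.1 hg n)

protected lemma const_mul (hf : OperatorMonotone f) {c : ℝ} (hc : 0 ≤ c) :
    OperatorMonotone fun x => c * f x := by
  refine operatorMonotone_iff.2 fun n A hA B hB hAB => ?_
  rw [cfc_const_mul c f A (continuousOn_spectrum_real f),
    cfc_const_mul c f B (continuousOn_spectrum_real f), le_iff, ← smul_sub]
  exact (le_iff.1 (operatorMonotone_iff.1 hf n hA hB hAB)).smul hc

open scoped Matrix.Norms.L2Operator in
lemma neg_inv_linear {c d : ℝ} (hc : 0 ≤ c) (hd : 0 < d) :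
    OperatorMonotone fun x => -(c * x + d)⁻¹ := by
  refine operatorMonotone_iff.2 fun n => ?_
  set L : Matrix (Fin n) (Fin n) ℂ → Matrix (Fin n) (Fin n) ℂ := fun A => c • A + d • 1 with hL
  have hL_pos : ∀ A, 0 ≤ A → IsStrictlyPositive (L A) := fun A hA =>
    isStrictlyPositive_iff_posDef.2
      ((PosDef.one.smul hd).posSemidef_add ((nonneg_iff_posSemidef.1 hA).smul hc))
  have hcfc : ∀ A, 0 ≤ A → cfc (fun x => -(c * x + d)⁻¹) A = -(L A)⁻¹ʳ := fun A hA => by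
    have hne : ∀ x ∈ spectrum ℝ A, c * x + d ≠ 0 := fun x hx => by
      have := spectrum_nonneg_of_nonneg hA hx
      positivity
    have hlin : cfc (fun x => c * x + d) A = L A := by
      rw [cfc_add_const d (c * ·) A, cfc_const_mul_id c A hA.isSelfAdjoint,
        Algebra.algebraMap_eq_smul_one]
    rw [cfc_neg, cfc_inv _ A hne, hlin]
  intro A hA B hB hAB
  rw [hcfc A hA, hcfc B hB, neg_le_neg_iff]
  refine CStarAlgebra.antitoneOn_ringInverse (hL_pos A hA) (hL_pos B hB) ?_
  simp only [hL, le_iff, add_sub_add_right_eq_sub, ← smul_sub]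
  exact (le_iff.1 hAB).smul hc

end OperatorMonotone

end OperatorMonotone

section Interlacing

open Polynomial Matrix Lagrange Finset

variable {ι : Type*}

/-- The families of nodes `a` and `b` interlace: the segments `[a i, b i]` are nondegenerate and
pairwise disjoint. With `a` sorted this reads `a 0 < b 0 < a 1 < b 1 < ⋯`, but no order on the
index type is needed. -/
structure Interlacing (a b : ι → ℝ) : Prop where
  lt : ∀ i, a i < b i
  disjoint : Pairwise fun i j => Disjoint (Set.Icc (a i) (b i)) (Set.Icc (a j) (b j))

namespace Interlacing

variable {a b : ι → ℝ}

lemma injective_left (h : Interlacing a b) : Function.Injective a := fun i j hij => by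
  by_contra hne
  exact Set.disjoint_left.1 (h.disjoint hne) (Set.left_mem_Icc.2 (h.lt i).le)
    (hij.symm ▸ Set.left_mem_Icc.2 (h.lt j).le)

lemma injective_right (h : Interlacing a b) : Function.Injective b := fun i j hij => by
  by_contra hne
  exact Set.disjoint_left.1 (h.disjoint hne) (Set.right_mem_Icc.2 (h.lt i).le)
    (hij.symm ▸ Set.right_mem_Icc.2 (h.lt j).le)

lemma mul_sub_pos (h : Interlacing a b) {i j : ι} (hij : i ≠ j) :
    0 < (a i - a j) * (a i - b j) := by
  have hnot : a i ∉ Set.Icc (a j) (b j) :=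
    Set.disjoint_left.1 (h.disjoint hij) (Set.left_mem_Icc.2 (h.lt i).le)
  have hj := h.lt j
  rcases lt_or_ge (a i) (a j) with hlt | hge
  · exact mul_pos_of_neg_of_neg (by linarith) (by linarith)
  · have hgt : b j < a i := lt_of_not_ge fun hle => hnot ⟨hge, hle⟩
    exact mul_pos (by linarith) (by linarith)

end Interlacing

lemma isHermitian_diagonal_ofReal [DecidableEq ι] (a : ι → ℝ) :
    (diagonal fun i => (a i : ℂ)).IsHermitian :=
  isHermitian_diagonal_iff.2 fun i => Complex.conj_ofReal (a i)

variable [Fintype ι] [DecidableEq ι]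

/-- The weights of the inner product on polynomials of degree less than the number of nodes for
which multiplication by `X` modulo `nodal univ a` and modulo `nodal univ b` are both symmetric. -/
noncomputable def interlacingWeight (a b : ι → ℝ) (i : ι) : ℝ :=
  -(nodalWeight univ a i / (nodal univ b).eval (a i))

/-- The coordinates of a polynomial with respect to an orthonormal basis of delta functions at the
nodes `a` for the inner product with weights `interlacingWeight a b`. -/
noncomputable def nodalVec (a b : ι → ℝ) : ℝ[X] →ₗ[ℝ] (ι → ℂ) where
  toFun p i := ((√(interlacingWeight a b i) * p.eval (a i) : ℝ) : ℂ)
  map_add' p g := by ext; simp [mul_add]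
  map_smul' c p := by ext; simp [mul_left_comm]

/-- In the coordinates `nodalVec a b`, multiplication by `X` modulo `nodal univ b`; multiplication
modulo `nodal univ a` is the diagonal matrix of the nodes `a`, and the two differ by a positive
rank-one matrix. -/
noncomputable def interlacingMatrix (a b : ι → ℝ) : Matrix ι ι ℂ :=
  diagonal (fun i => (a i : ℂ)) +
    vecMulVec (nodalVec a b (nodal univ b)) (star (nodalVec a b (nodal univ b)))

section Nodal

variable {a b : ι → ℝ}

lemma nodalVec_apply (p : ℝ[X]) (i : ι) :
    nodalVec a b p i = ((√(interlacingWeight a b i) * p.eval (a i) : ℝ) : ℂ) := rfl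

lemma nodalVec_nodal_left : nodalVec a b (nodal univ a) = 0 := by
  ext i
  rw [nodalVec_apply, eval_nodal_at_node (mem_univ i), mul_zero, Complex.ofReal_zero, Pi.zero_apply]

lemma isHermitian_interlacingMatrix : (interlacingMatrix a b).IsHermitian :=
  (isHermitian_diagonal_ofReal a).add (posSemidef_vecMulVec_self_star _).isHermitian

lemma diagonal_mulVec_nodalVec (p : ℝ[X]) :
    (diagonal fun i => (a i : ℂ)) *ᵥ nodalVec a b p = nodalVec a b (X * p) := by
  ext i
  rw [mulVec_diagonal, nodalVec_apply, nodalVec_apply, eval_mul, eval_X]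
  push_cast
  ring

lemma diagonal_mulVec_nodalVec_basis (j : ι) :
    (diagonal fun i => (a i : ℂ)) *ᵥ nodalVec a b (Lagrange.basis univ a j) =
      a j • nodalVec a b (Lagrange.basis univ a j) := by
  rw [diagonal_mulVec_nodalVec, X_mul_basis (mem_univ j), map_add, map_smul, ← smul_eq_C_mul,
    map_smul, nodalVec_nodal_left, smul_zero, add_zero]

namespace Interlacing

lemma interlacingWeight_pos (h : Interlacing a b) (i : ι) : 0 < interlacingWeight a b i := by
  have hprod : interlacingWeight a b i =
      (b i - a i)⁻¹ * ∏ j ∈ univ.erase i, ((a i - a j) * (a i - b j))⁻¹ := by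
    rw [interlacingWeight, nodalWeight, eval_nodal, ← mul_prod_erase univ _ (mem_univ i),
      ← neg_sub (b i), neg_mul, div_neg, neg_neg, div_eq_mul_inv]
    simp only [mul_inv, prod_mul_distrib, prod_inv_distrib]
    ring
  rw [hprod]
  exact mul_pos (inv_pos.2 (sub_pos.2 (h.lt i)))
    (prod_pos fun j hj => inv_pos.2 (h.mul_sub_pos (ne_of_mem_erase hj).symm))

lemma eval_eq_of_nodalVec_eq (h : Interlacing a b) {p g : ℝ[X]}
    (hpg : nodalVec a b p = nodalVec a b g) (i : ι) : p.eval (a i) = g.eval (a i) :=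
  mul_left_cancel₀ (Real.sqrt_pos.2 (h.interlacingWeight_pos i)).ne'
    (Complex.ofReal_injective (congrFun hpg i))

lemma star_nodalVec_nodal_dotProduct (h : Interlacing a b) {p : ℝ[X]}
    (hp : p.degree < Fintype.card ι) :
    star (nodalVec a b (nodal univ b)) ⬝ᵥ nodalVec a b p =
      ((-p.coeff (Fintype.card ι - 1) : ℝ) : ℂ) := by
  have hterm : ∀ i, √(interlacingWeight a b i) * (nodal univ b).eval (a i) *
      (√(interlacingWeight a b i) * p.eval (a i)) =
        -(p.eval (a i) / ∏ j ∈ univ.erase i, (a i - a j)) := fun i => by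
    have hw := h.interlacingWeight_pos i
    have hne : (nodal univ b).eval (a i) ≠ 0 := fun h0 => by
      simp [interlacingWeight, h0] at hw
    rw [mul_mul_mul_comm, Real.mul_self_sqrt hw.le, interlacingWeight, nodalWeight,
      prod_inv_distrib]
    field_simp
  rw [← card_univ, coeff_eq_sum h.injective_left.injOn hp, ← sum_neg_distrib, Complex.ofReal_sum]
  refine sum_congr rfl fun i _ => ?_
  rw [← hterm, Complex.ofReal_mul, Pi.star_apply, nodalVec_apply, nodalVec_apply]
  exact congrArg (· * _) (Complex.conj_ofReal _)

lemma interlacingMatrix_mulVec_nodalVec (h : Interlacing a b) {p : ℝ[X]}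
    (hp : p.degree < Fintype.card ι) : interlacingMatrix a b *ᵥ nodalVec a b p =
      nodalVec a b (X * p - C (p.coeff (Fintype.card ι - 1)) * nodal univ b) := by
  rw [interlacingMatrix, add_mulVec, diagonal_mulVec_nodalVec, vecMulVec_mulVec,
    h.star_nodalVec_nodal_dotProduct hp, map_sub, ← smul_eq_C_mul, map_smul, sub_eq_add_neg,
    ← neg_smul]
  ext i
  simp [mul_comm]

lemma interlacingMatrix_mulVec_nodalVec_basis (h : Interlacing a b) (j : ι) :
    interlacingMatrix a b *ᵥ nodalVec a b (Lagrange.basis univ b j) =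
      b j • nodalVec a b (Lagrange.basis univ b j) := by
  have hb := h.injective_right.injOn (s := ((univ : Finset ι) : Set ι))
  have hdeg : (Lagrange.basis univ b j).degree < Fintype.card ι := by
    rw [degree_basis hb (mem_univ j), card_univ]
    exact_mod_cast Nat.sub_lt (Fintype.card_pos_iff.2 ⟨j⟩) one_pos
  rw [h.interlacingMatrix_mulVec_nodalVec hdeg, ← card_univ, coeff_basis hb (mem_univ j),
    X_mul_basis (mem_univ j), add_sub_cancel_right, map_smul]

lemma cfc_diagonal_mulVec_nodalVec (h : Interlacing a b) {f : ℝ → ℝ} {p g : ℝ[X]}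
    (hp : p.degree < Fintype.card ι) (hg : g.degree < Fintype.card ι)
    (hfp : ∀ i, f (a i) * p.eval (a i) = g.eval (a i)) :
    cfc f (diagonal fun i => (a i : ℂ)) *ᵥ nodalVec a b p = nodalVec a b g :=
  cfc_mulVec_of_mulVec_basis (isHermitian_diagonal_ofReal a) _ h.injective_left
    diagonal_mulVec_nodalVec_basis hp hg hfp

lemma cfc_interlacingMatrix_mulVec_nodalVec (h : Interlacing a b) {f : ℝ → ℝ} {p g : ℝ[X]}
    (hp : p.degree < Fintype.card ι) (hg : g.degree < Fintype.card ι)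
    (hfp : ∀ i, f (b i) * p.eval (b i) = g.eval (b i)) :
    cfc f (interlacingMatrix a b) *ᵥ nodalVec a b p = nodalVec a b g :=
  cfc_mulVec_of_mulVec_basis isHermitian_interlacingMatrix _ h.injective_right
    h.interlacingMatrix_mulVec_nodalVec_basis hp hg hfp

end Interlacing

end Nodal

theorem exists_degree_lt_of_interlacing {n : ℕ} {a b : Fin n → ℝ} (h : Interlacing a b)
    (ha : ∀ i, 0 ≤ a i) {q r : ℝ → ℝ} (hq : OperatorMonotone q) (hr : OperatorMonotone r)
    {P N : ℝ[X]} (hP : P.degree < n) (hN : N.degree < n)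
    (hPNa : ∀ i, (q (a i) + r (a i)) * P.eval (a i) = N.eval (a i))
    (hPNb : ∀ i, (q (b i) + r (b i)) * P.eval (b i) = N.eval (b i)) :
    ∃ p : ℝ[X], p.degree < n ∧ (∀ i, q (a i) * P.eval (a i) = p.eval (a i)) ∧
      ∀ i, q (b i) * P.eval (b i) = p.eval (b i) := by
  obtain ⟨pa, hpa, hqa⟩ :=
    exists_degree_lt_eval_eq h.injective_left fun i => q (a i) * P.eval (a i)
  obtain ⟨pb, hpb, hqb⟩ :=
    exists_degree_lt_eval_eq h.injective_right fun i => q (b i) * P.eval (b i)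
  rw [← Fintype.card_fin n] at hP hN
  set A : Matrix (Fin n) (Fin n) ℂ := diagonal fun i => (a i : ℂ)
  set B := interlacingMatrix a b
  set v := nodalVec a b P
  have hA : A.PosSemidef := posSemidef_diagonal_iff.2 fun i => by exact_mod_cast ha i
  have hAB : (B - A).PosSemidef := by
    rw [show B = A + _ from rfl, add_sub_cancel_left]
    exact posSemidef_vecMulVec_self_star _
  have hB : B.PosSemidef := by simpa using hA.add hAB
  have hsum : (cfc q B - cfc q A + (cfc r B - cfc r A)) *ᵥ v = 0 := by
    have hcfc : ∀ M : Matrix (Fin n) (Fin n) ℂ, cfc (fun x => q x + r x) M = cfc q M + cfc r M :=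
      fun M => cfc_add M q r (continuousOn_spectrum_real q) (continuousOn_spectrum_real r)
    rw [sub_add_sub_comm, ← hcfc, ← hcfc, sub_mulVec,
      h.cfc_interlacingMatrix_mulVec_nodalVec hP hN hPNb,
      h.cfc_diagonal_mulVec_nodalVec hP hN hPNa, sub_self]
  have hker : cfc q B *ᵥ v = cfc q A *ᵥ v := by
    rw [← sub_eq_zero, ← sub_mulVec]
    exact mulVec_eq_zero_of_add_mulVec_eq_zero (hq n A B hA hB hAB) (hr n A B hA hB hAB) hsum
  rw [h.cfc_interlacingMatrix_mulVec_nodalVec hP hpb hqb,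
    h.cfc_diagonal_mulVec_nodalVec hP hpa hqa] at hker
  exact ⟨pb, by rwa [Fintype.card_fin] at hpb,
    fun i => (hqa i).trans (h.eval_eq_of_nodalVec_eq hker i).symm, hqb⟩

lemma Interlacing.of_strictMono {n : ℕ} {e : Fin (2 * n) → ℝ} (he : StrictMono e) :
    Interlacing (fun i : Fin n => e ⟨2 * i, by omega⟩) (fun i => e ⟨2 * i + 1, by omega⟩) where
  lt i := he (Nat.lt_succ_self _)
  disjoint := by
    rw [pairwise_disjoint_on]
    refine fun i j hij => Set.disjoint_left.2 fun x hx hx' => ?_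
    have hlt : e ⟨2 * i + 1, by omega⟩ < e ⟨2 * j, by omega⟩ :=
      he (Fin.mk_lt_mk.2 (by omega))
    exact (hx.2.trans_lt hlt).not_ge hx'.1

lemma exists_degree_lt_on_finset {S : Finset ℝ} (hS : ∀ x ∈ S, 0 ≤ x) {n : ℕ}
    (hcard : #S = 2 * n) {q r : ℝ → ℝ} (hq : OperatorMonotone q) (hr : OperatorMonotone r)
    {P N : ℝ[X]} (hP : P.degree < n) (hN : N.degree < n)
    (hPN : ∀ x ∈ S, (q x + r x) * P.eval x = N.eval x) :
    ∃ p : ℝ[X], p.degree < n ∧ ∀ x ∈ S, q x * P.eval x = p.eval x := by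
  set e := S.orderEmbOfFin hcard
  have he : ∀ k, e k ∈ S := S.orderEmbOfFin_mem hcard
  obtain ⟨p, hp, hpa, hpb⟩ := exists_degree_lt_of_interlacing
    (.of_strictMono e.strictMono) (fun _ => hS _ (he _)) hq hr hP hN
    (fun _ => hPN _ (he _)) (fun _ => hPN _ (he _))
  refine ⟨p, hp, fun x hx => ?_⟩
  obtain ⟨k, rfl⟩ : x ∈ Set.range e := by rwa [S.range_orderEmbOfFin hcard]
  obtain ⟨i, hi | hi⟩ := k.val.even_or_odd'
  · convert hpa ⟨i, by omega⟩
  · convert hpb ⟨i, by omega⟩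

theorem OperatorMonotone.exists_degree_le_of_add {q r : ℝ → ℝ} (hq : OperatorMonotone q)
    (hr : OperatorMonotone r) {P N : ℝ[X]} {d : ℕ} (hP : P.degree ≤ d) (hN : N.degree ≤ d)
    (hPN : ∀ x, 0 ≤ x → (q x + r x) * P.eval x = N.eval x) :
    ∃ p : ℝ[X], p.degree ≤ d ∧ ∀ x, 0 ≤ x → q x * P.eval x = p.eval x := by
  have hlt : ∀ p : ℝ[X], p.degree ≤ d ↔ p.degree < (d + 1 : ℕ) := fun p => by
    simp only [degree_le_iff_coeff_zero, degree_lt_iff_coeff_zero, Nat.succ_le_iff, Nat.cast_lt]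
  simp only [hlt] at hP hN ⊢
  exact exists_degree_lt_on_of_forall_finset (Set.Ici_infinite 0) (by omega) fun S hS hcard =>
    exists_degree_lt_on_finset hS hcard hq hr hP hN fun x hx => hPN x (hS hx)

end Interlacing

section WeightedHarmonicMean

variable {t x : ℝ}

lemma whm_zero_left (x : ℝ) : whm 0 x = 1 := by
  by_cases hx : x = 0
  · simp [whm, hx]
  · simp [whm, hx]

lemma whm_one_left (x : ℝ) : whm 1 x = x := by
  simp [whm]

lemma whm_denom_pos (ht : 0 < t) (ht' : t ≤ 1) (hx : 0 ≤ x) : 0 < (1 - t) * x + t :=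
  add_pos_of_nonneg_of_pos (mul_nonneg (sub_nonneg.2 ht') hx) ht

lemma whm_of_pos (ht : 0 < t) (x : ℝ) : whm t x = x / ((1 - t) * x + t) :=
  if_neg fun h => ht.ne' h.1

lemma whm_nonneg (ht : t ∈ Set.Icc (0 : ℝ) 1) (hx : 0 ≤ x) : 0 ≤ whm t x := by
  have := sub_nonneg.2 ht.2
  have := ht.1
  unfold whm
  split_ifs <;> positivity

lemma whm_one_right (t : ℝ) : whm t 1 = 1 := by
  simp [whm]

lemma whm_eq_mul_whm_inv (t : ℝ) (hx : 0 < x) : whm t x = x * whm (1 - t) (1 / x) := by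
  have hden : (1 - (1 - t)) * (1 / x) + (1 - t) = ((1 - t) * x + t) / x := by
    field_simp
    ring
  rw [whm, whm, if_neg fun h => hx.ne' h.2, if_neg fun h => (one_div_pos.2 hx).ne' h.2, hden,
    div_div_div_cancel_right₀ hx.ne', mul_one_div]

lemma operatorMonotone_whm (ht : t ∈ Set.Icc (0 : ℝ) 1) : OperatorMonotone (whm t) := by
  obtain rfl | ht0 := ht.1.eq_or_lt
  · exact (OperatorMonotone.const 1).congr fun x _ => (whm_zero_left x).symm
  obtain rfl | ht1 := ht.2.eq_or_lt
  · exact OperatorMonotone.id.congr fun x _ => (whm_one_left x).symm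
  have h1t := sub_pos.2 ht1
  refine ((OperatorMonotone.const (1 / (1 - t))).add
    ((OperatorMonotone.neg_inv_linear h1t.le ht0).const_mul (div_pos ht0 h1t).le)).congr
      fun x hx => ?_
  have hden := whm_denom_pos ht0 ht1.le hx
  rw [whm_of_pos ht0]
  field_simp
  ring

/-- The symmetrization `x ↦ (1 !_t x + 1 !_{1-t} x) / 2` of the weighted harmonic mean. -/
noncomputable def symmWhm (t x : ℝ) : ℝ :=
  (whm t x + whm (1 - t) x) / 2

lemma symmWhm_one_right (t : ℝ) : symmWhm t 1 = 1 := by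
  rw [symmWhm, whm_one_right, whm_one_right]
  norm_num

lemma symmWhm_of_eq_zero_or_one (ht : t = 0 ∨ t = 1) (x : ℝ) : symmWhm t x = (1 + x) / 2 := by
  rcases ht with rfl | rfl
  · rw [symmWhm, sub_zero, whm_zero_left, whm_one_left]
  · rw [symmWhm, sub_self, whm_zero_left, whm_one_left, add_comm]

lemma symmWhm_eq_mul_symmWhm_inv (t : ℝ) (hx : 0 < x) :
    symmWhm t x = x * symmWhm t (1 / x) := by
  rw [symmWhm, symmWhm, whm_eq_mul_whm_inv t hx, whm_eq_mul_whm_inv (1 - t) hx, sub_sub_cancel]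
  ring

lemma operatorMonotone_symmWhm (ht : t ∈ Set.Icc (0 : ℝ) 1) : OperatorMonotone (symmWhm t) :=
  (((operatorMonotone_whm ht).add (operatorMonotone_whm (Set.Icc.one_sub_mem ht))).const_mul
    (inv_nonneg.2 zero_le_two)).congr fun _ _ => inv_mul_eq_div _ _

lemma ext_of_nonneg (f : Set.Ici (0 : ℝ) → ℝ) (hx : 0 ≤ x) : ext f x = f ⟨x, hx⟩ :=
  dif_pos hx

lemma symmWhm_mem_Ssym (ht : t ∈ Set.Icc (0 : ℝ) 1) :
    (fun x : Set.Ici (0 : ℝ) => symmWhm t x) ∈ Ssym :=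
  ⟨fun x => div_nonneg (add_nonneg (whm_nonneg ht x.2)
      (whm_nonneg (Set.Icc.one_sub_mem ht) x.2)) zero_le_two,
    (operatorMonotone_symmWhm ht).congr fun _ hx => (ext_of_nonneg (fun x => symmWhm t x) hx).symm,
    symmWhm_one_right t, fun _ hx => symmWhm_eq_mul_symmWhm_inv t hx⟩

end WeightedHarmonicMean

section Extremality

open Polynomial

variable {t x : ℝ} {g r : ℝ → ℝ}

/-- The common denominator of `1 !_t x` and `1 !_{1-t} x`. -/
noncomputable def whmDenom (t : ℝ) : ℝ[X] :=
  (C (1 - t) * X + C t) * (C t * X + C (1 - t))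

lemma eval_whmDenom (t x : ℝ) :
    (whmDenom t).eval x = ((1 - t) * x + t) * (t * x + (1 - t)) := by
  simp [whmDenom]

lemma eval_whmDenom_one (t : ℝ) : (whmDenom t).eval 1 = 1 := by
  rw [eval_whmDenom]
  ring

lemma eval_whmDenom_pos (ht : t ∈ Set.Ioo (0 : ℝ) 1) (hx : 0 ≤ x) : 0 < (whmDenom t).eval x := by
  have h := whm_denom_pos (sub_pos.2 ht.2) (sub_le_self 1 ht.1.le) hx
  rw [sub_sub_cancel] at h
  rw [eval_whmDenom]
  exact mul_pos (whm_denom_pos ht.1 ht.2.le hx) h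

lemma degree_whmDenom_le (t : ℝ) : (whmDenom t).degree ≤ 2 :=
  degree_mul_le_of_le degree_linear_le degree_linear_le

lemma eval_whmDenom_eq_sq_mul (t : ℝ) (hx : 0 < x) :
    (whmDenom t).eval x = x ^ 2 * (whmDenom t).eval (1 / x) := by
  rw [eval_whmDenom, eval_whmDenom]
  field_simp
  ring

lemma symmWhm_mul_eval_whmDenom (ht : t ∈ Set.Ioo (0 : ℝ) 1) (hx : 0 ≤ x) :
    symmWhm t x * (whmDenom t).eval x = (x ^ 2 + x) / 2 := by
  have h := whm_denom_pos ht.1 ht.2.le hx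
  have h' := whm_denom_pos (sub_pos.2 ht.2) (sub_le_self 1 ht.1.le) hx
  have hw := div_mul_cancel₀ x h.ne'
  have hw' := div_mul_cancel₀ x h'.ne'
  rw [← whm_of_pos ht.1] at hw
  rw [← whm_of_pos (sub_pos.2 ht.2), sub_sub_cancel] at hw'
  rw [symmWhm, eval_whmDenom]
  linear_combination (t * x + (1 - t)) / 2 * hw + ((1 - t) * x + t) / 2 * hw'

lemma eval_eq_of_degree_le_one_of_symm {p : ℝ[X]} (hp : p.degree ≤ 1)
    (hsymm : ∀ x, 0 < x → p.eval x = x * p.eval (1 / x)) (x : ℝ) :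
    p.eval x = p.eval 1 * ((1 + x) / 2) := by
  have hlin : ∀ y, p.eval y = p.coeff 1 * y + p.coeff 0 := fun y => by
    conv_lhs => rw [eq_X_add_C_of_degree_le_one hp]
    simp
  have h2 := hsymm 2 two_pos
  simp only [hlin] at h2 ⊢
  linear_combination (x - 1) / 2 * h2

lemma eval_eq_of_degree_le_two_of_symm {p : ℝ[X]} (hp : p.degree ≤ 2)
    (hsymm : ∀ x, 0 < x → p.eval x = x ^ 3 * p.eval (1 / x)) (x : ℝ) :
    p.eval x = p.eval 1 * ((x ^ 2 + x) / 2) := by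
  have hquad : ∀ y, p.eval y = p.coeff 0 + p.coeff 1 * y + p.coeff 2 * y ^ 2 := fun y => by
    rw [eval_eq_sum_range' (Nat.lt_succ_of_le (natDegree_le_of_degree_le hp))]
    simp [Finset.sum_range_succ]
  have h2 := hsymm 2 two_pos
  have h3 := hsymm 3 three_pos
  simp only [hquad] at h2 h3 ⊢
  have h0 : p.coeff 0 = 0 := by linarith
  have h1 : p.coeff 1 = p.coeff 2 := by linarith
  rw [h0, h1]
  ring

lemma eq_mul_half_one_add_of_add_eq (hg : OperatorMonotone g) (hr : OperatorMonotone r)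
    (hsymm : ∀ x, 0 < x → g x = x * g (1 / x))
    (hadd : ∀ x, 0 ≤ x → g x + r x = (1 + x) / 2) (hx : 0 ≤ x) :
    g x = g 1 * ((1 + x) / 2) := by
  obtain ⟨p, hp, hgp⟩ := hg.exists_degree_le_of_add hr (P := 1)
    (N := C (1 / 2) * X + C (1 / 2)) (d := 1) (by simp) degree_linear_le fun y hy => by
      simp only [hadd y hy, eval_one, eval_add, eval_mul, eval_C, eval_X]
      ring
  simp only [eval_one, mul_one] at hgp
  rw [hgp x hx, hgp 1 zero_le_one]
  refine eval_eq_of_degree_le_one_of_symm hp (fun y hy => ?_) x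
  rw [← hgp y hy.le, ← hgp _ (one_div_nonneg.2 hy.le), hsymm y hy]

lemma eq_mul_symmWhm_of_add_eq_of_mem_Ioo (ht : t ∈ Set.Ioo (0 : ℝ) 1) (hg : OperatorMonotone g)
    (hr : OperatorMonotone r) (hsymm : ∀ x, 0 < x → g x = x * g (1 / x))
    (hadd : ∀ x, 0 ≤ x → g x + r x = symmWhm t x) (hx : 0 ≤ x) :
    g x = g 1 * symmWhm t x := by
  obtain ⟨p, hp, hgp⟩ := hg.exists_degree_le_of_add hr (P := whmDenom t)
    (N := C (1 / 2) * X ^ 2 + C (1 / 2) * X + C 0) (d := 2) (degree_whmDenom_le t)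
    degree_quadratic_le fun y hy => by
      simp only [hadd y hy, symmWhm_mul_eval_whmDenom ht hy, eval_add, eval_mul, eval_C, eval_X,
        eval_pow]
      ring
  have hp_symm : ∀ y, 0 < y → p.eval y = y ^ 3 * p.eval (1 / y) := fun y hy => by
    rw [← hgp y hy.le, ← hgp _ (one_div_nonneg.2 hy.le), hsymm y hy, eval_whmDenom_eq_sq_mul t hy]
    ring
  have hp_one : p.eval 1 = g 1 := by rw [← hgp 1 zero_le_one, eval_whmDenom_one, mul_one]
  refine mul_right_cancel₀ (eval_whmDenom_pos ht hx).ne' ?_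
  rw [hgp x hx, eval_eq_of_degree_le_two_of_symm hp hp_symm, hp_one, mul_assoc,
    symmWhm_mul_eval_whmDenom ht hx]

theorem eq_mul_symmWhm_of_add_eq (ht : t ∈ Set.Icc (0 : ℝ) 1) (hg : OperatorMonotone g)
    (hr : OperatorMonotone r) (hsymm : ∀ x, 0 < x → g x = x * g (1 / x))
    (hadd : ∀ x, 0 ≤ x → g x + r x = symmWhm t x) (hx : 0 ≤ x) :
    g x = g 1 * symmWhm t x := by
  -- For `t ∈ {0, 1}` the polynomial `whmDenom t` vanishes at `0`, and `g`, which may jump there,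
  -- would not be determined at `0`; the denominator `1` is used instead.
  by_cases ht' : t = 0 ∨ t = 1
  · rw [symmWhm_of_eq_zero_or_one ht']
    exact eq_mul_half_one_add_of_add_eq hg hr hsymm
      (fun y hy => (hadd y hy).trans (symmWhm_of_eq_zero_or_one ht' y)) hx
  · exact eq_mul_symmWhm_of_add_eq_of_mem_Ioo (by grind) hg hr hsymm hadd hx

end Extremality

theorem stmt17 (t : ℝ) (ht : t ∈ Set.Icc (0 : ℝ) 1) :
    (fun x : Set.Ici (0 : ℝ) => (whm t (x : ℝ) + whm (1 - t) (x : ℝ)) / 2) ∈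
      Ssym.extremePoints ℝ := by
  refine mem_extremePoints_iff_left.2 ⟨symmWhm_mem_Ssym ht, ?_⟩
  rintro q ⟨-, hq, hq_one, hq_symm⟩ r ⟨-, hr, -⟩ ⟨α, β, hα, hβ, -, hqr⟩
  have hsymm : ∀ x, 0 < x → α * ext q x = x * (α * ext q (1 / x)) := fun x hx => by
    rw [ext_of_nonneg q hx.le, ext_of_nonneg q (one_div_nonneg.2 hx.le), hq_symm ⟨x, hx.le⟩ hx,
      mul_left_comm, recip]
  have hadd : ∀ x, 0 ≤ x → α * ext q x + β * ext r x = symmWhm t x := fun x hx => by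
    rw [ext_of_nonneg q hx, ext_of_nonneg r hx]
    exact congrFun hqr ⟨x, hx⟩
  funext x
  have key := eq_mul_symmWhm_of_add_eq ht (hq.const_mul hα.le) (hr.const_mul hβ.le) hsymm hadd x.2
  rw [ext_of_nonneg q x.2, ext_of_nonneg q zero_le_one, hq_one, mul_one] at key
  exact mul_left_cancel₀ hα.ne' key
end
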